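/- arXiv:1909.09500 — 9 statements merged into one kernel-verified Lean document; each statement's English description precedes it below -/
import Mathlib

section
/- Let H be a complex Hilbert space, let n ≥ 1 be an integer, and let A be a bounded linear operator on H that is n-normal, i.e. A* A^n = A^n A*. Then both A and its adjoint A* have the single-valued extension property: for every open set U ⊆ ℂ and every analytic function f : U → H satisfying (A − λ)f(λ) = 0 for all λ ∈ U (respectively (A* − λ)f(λ) = 0 for all λ ∈ U), one has f ≡ 0 on U. -/
open ContinuousLinearMap Filter Topology

/-!
If `B (f z) = z • f z` on `U`, then `B ^ n (f z) = z ^ n • f z`. When `B ^ n` is normal, its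
eigenvectors for distinct eigenvalues are orthogonal (`inner_eq_zero_of_isStarNormal`), so
`⟪f z, f w⟫ = 0` whenever `z ^ n ≠ w ^ n`. Such `w` accumulate at `z`, since `z ^ n` has only
finitely many `n`-th roots, and continuity of `f` gives `⟪f z, f z⟫ = 0`. This applies to `A` itself
and to its adjoint, because `(A*) ^ n = (A ^ n)*` is normal as well.
-/

/-- Eigenvectors of a normal operator for distinct eigenvalues are orthogonal. -/
theorem inner_eq_zero_of_isStarNormal {H : Type*} [NormedAddCommGroup H] [InnerProductSpace ℂ H]
    [CompleteSpace H] {N : H →L[ℂ] H} (hN : IsStarNormal N) {a b : ℂ} (hab : a ≠ b) {x y : H}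
    (hx : N x = a • x) (hy : N y = b • y) : inner ℂ x y = 0 := by
  have hM : IsStarNormal (N - a • (1 : H →L[ℂ] H)) := by
    refine ⟨?_⟩
    have h := hN.star_comm_self.eq
    simp only [Commute, SemiconjBy, star_sub, star_smul, star_one, sub_mul, mul_sub, h,
      smul_mul_assoc, mul_smul_comm, one_mul, mul_one, smul_sub, smul_comm a (star a)]
    abel
  have hMx : (N - a • (1 : H →L[ℂ] H)) x = 0 := by simp [hx]
  have hMx' : adjoint (N - a • (1 : H →L[ℂ] H)) x = 0 :=
    (ContinuousLinearMap.IsStarNormal.adjoint_apply_eq_zero_iff hM x).2 hMx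
  have h : inner ℂ x ((N - a • (1 : H →L[ℂ] H)) y) = 0 := by
    rw [← adjoint_inner_left, hMx', inner_zero_left]
  have hMy : (N - a • (1 : H →L[ℂ] H)) y = (b - a) • y := by simp [hy, sub_smul]
  rw [hMy, inner_smul_right] at h
  exact (mul_eq_zero.1 h).resolve_left (sub_ne_zero.2 hab.symm)

/-- The single-valued extension property for an operator with a normal power. Only the continuity
of the eigenvector field is needed, not its analyticity. -/
theorem svep_of_isStarNormal_pow {H : Type*} [NormedAddCommGroup H] [InnerProductSpace ℂ H]
    [CompleteSpace H] {n : ℕ} (hn : 1 ≤ n) {B : H →L[ℂ] H} (hB : IsStarNormal (B ^ n))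
    {U : Set ℂ} {f : ℂ → H} (hU : IsOpen U) (hf : ContinuousOn f U)
    (h : ∀ z ∈ U, (B - z • 1) (f z) = 0) : ∀ z ∈ U, f z = 0 := by
  have hpow : ∀ z ∈ U, ∀ k : ℕ, (B ^ k) (f z) = z ^ k • f z := by
    intro z hz k
    have h1 : B (f z) = z • f z := by simpa [sub_eq_zero] using h z hz
    induction k with
    | zero => simp
    | succ k ih => rw [pow_succ', mul_apply_eq_comp, ih, map_smul, h1, smul_smul,
        pow_succ]
  intro z hz
  have hfin : {w : ℂ | w ^ n = z ^ n}.Finite := by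
    refine ((Polynomial.nthRoots n (z ^ n)).toFinset.finite_toSet).subset fun w hw => ?_
    simpa [Polynomial.mem_nthRoots hn] using hw
  have hev : ∀ᶠ w in 𝓝[≠] z, inner ℂ (f z) (f w) = 0 := by
    have hroot : ∀ᶠ w in 𝓝[≠] z, w ∉ {w : ℂ | w ^ n = z ^ n} \ {z} :=
      nhdsWithin_le_nhds
        ((hfin.subset Set.sdiff_subset).isClosed.isOpen_compl.mem_nhds (by simp))
    filter_upwards [hroot, self_mem_nhdsWithin, nhdsWithin_le_nhds (hU.mem_nhds hz)]
      with w hw hne hwU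
    exact inner_eq_zero_of_isStarNormal hB (fun e => hw ⟨e.symm, hne⟩)
      (hpow z hz n) (hpow w hwU n)
  have hlim : Tendsto (fun w => inner ℂ (f z) (f w)) (𝓝[≠] z) (𝓝 (inner ℂ (f z) (f z))) :=
    (tendsto_const_nhds.inner (hf.continuousAt (hU.mem_nhds hz))).mono_left nhdsWithin_le_nhds
  have h0 : inner ℂ (f z) (f z) = 0 :=
    tendsto_nhds_unique hlim (tendsto_const_nhds.congr' (hev.mono fun _ hw => hw.symm))
  exact inner_self_eq_zero.1 h0

/-- An `n`-normal operator `A` (i.e. `A* A^n = A^n A*`) and its adjoint `A*`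
both have the single-valued extension property. -/
theorem nNormal_svep {H : Type*} [NormedAddCommGroup H] [InnerProductSpace ℂ H]
    [CompleteSpace H] (n : ℕ) (hn : 1 ≤ n) (A : H →L[ℂ] H)
    (hA : adjoint A * A ^ n = A ^ n * adjoint A) :
    (∀ (U : Set ℂ) (f : ℂ → H), IsOpen U → DifferentiableOn ℂ f U →
        (∀ z ∈ U, (A - z • 1) (f z) = 0) → ∀ z ∈ U, f z = 0) ∧
    (∀ (U : Set ℂ) (f : ℂ → H), IsOpen U → DifferentiableOn ℂ f U →
        (∀ z ∈ U, (adjoint A - z • 1) (f z) = 0) → ∀ z ∈ U, f z = 0) := by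
  have hcomm : Commute (adjoint A ^ n) (A ^ n) := Commute.pow_left hA n
  have hN : IsStarNormal (A ^ n) := ⟨by rw [star_pow]; exact hcomm⟩
  have hN' : IsStarNormal (adjoint A ^ n) :=
    ⟨by rw [star_pow, star_eq_adjoint (adjoint A), adjoint_adjoint]; exact hcomm.symm⟩
  exact ⟨fun U f hU hf h => svep_of_isStarNormal_pow hn hN hU hf.continuousOn h,
    fun U f hU hf h => svep_of_isStarNormal_pow hn hN' hU hf.continuousOn h⟩
end

section
/- Let H be a complex Hilbert space, let n ≥ 1 be an integer, and let A be a bounded linear operator on H that is n-normal, i.e. A* A^n = A^n A*. Then the spectrum of A equals its approximate point spectrum: σ(A) = σ_a(A). -/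
/-!
Only the inclusion `σ(A) ⊆ σ_a(A)` uses `n`-normality. If `A - z` is bounded below, it is invertible
as soon as its range is dense, that is, as soon as `ker (A - z)* = 0`. This follows from injectivity
of `A - z` alone (`eq_zero_of_adjoint_apply_eq`). Indeed, if `A* y = z̄ y`, then
`(A ^ n)* y = (z̄) ^ n y`, and `A ^ n` being normal, `A ^ n y = z ^ n y`. Factoring
`A ^ n - z ^ n = (A - z) q(A)` with `q(A) = ∑ A ^ i z ^ (n - 1 - i)`, injectivity gives `q(A) y = 0`.
Pairing with `y` and using `⟪y, A ^ i y⟫ = z ^ i ‖y‖ ^ 2` yields `n z ^ (n - 1) ‖y‖ ^ 2 = 0`, so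
`y = 0` unless `z = 0`; and for `z = 0` injectivity of `A` applied to `A ^ n y = 0` gives `y = 0`.
-/

open ContinuousLinearMap Filter Topology

/-- The approximate point spectrum of a bounded operator `S`: the set of `z : ℂ` for which
there is a sequence of unit vectors `x m` with `‖(S - z) x m‖ → 0`. -/
def approxPointSpectrum {H : Type*} [NormedAddCommGroup H] [InnerProductSpace ℂ H]
    (S : H →L[ℂ] H) : Set ℂ :=
  {z : ℂ | ∃ x : ℕ → H, (∀ m, ‖x m‖ = 1) ∧
    Tendsto (fun m => ‖(S - z • 1) (x m)‖) atTop (nhds 0)}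

section NNormal

variable {H : Type*} [NormedAddCommGroup H] [InnerProductSpace ℂ H]

/-- A point outside the approximate point spectrum has `S - z` bounded below. -/
lemma exists_antilipschitz_of_notMem {S : H →L[ℂ] H} {z : ℂ}
    (h : z ∉ approxPointSpectrum S) : ∃ K, AntilipschitzWith K ⇑(S - z • (1 : H →L[ℂ] H)) := by
  by_contra hK
  apply h
  have key : ∀ m : ℕ, ∃ x : H, ‖x‖ = 1 ∧ ‖(S - z • 1) x‖ ≤ 1 / ((m : ℝ) + 1) := by
    intro m
    have hm : (0 : ℝ) < (m : ℝ) + 1 := by positivity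
    have hx : ∃ x : H, ((m : ℝ) + 1) * ‖(S - z • 1) x‖ < ‖x‖ := by
      by_contra! hcon
      refine hK ⟨(m : NNReal) + 1, (S - z • 1).antilipschitz_of_bound fun x => ?_⟩
      simpa using hcon x
    obtain ⟨x, hx⟩ := hx
    have hx0 : 0 < ‖x‖ := lt_of_le_of_lt (by positivity) hx
    refine ⟨((‖x‖⁻¹ : ℝ) : ℂ) • x, ?_, ?_⟩
    · rw [norm_smul, Complex.norm_real, norm_inv, norm_norm, inv_mul_cancel₀ hx0.ne']
    · rw [map_smul, norm_smul, Complex.norm_real, norm_inv, norm_norm, le_div_iff₀ hm,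
        mul_assoc, inv_mul_le_iff₀ hx0]
      linarith
  choose x hx1 hx2 using key
  exact ⟨x, hx1, squeeze_zero (fun _ => norm_nonneg _) hx2 tendsto_one_div_add_atTop_nhds_zero_nat⟩

lemma approxPointSpectrum_subset_spectrum (S : H →L[ℂ] H) :
    approxPointSpectrum S ⊆ spectrum ℂ S := by
  rintro z ⟨x, hx1, hx⟩ hz
  have hu : IsUnit (S - z • 1) := by
    have hneg := IsUnit.neg hz
    rwa [neg_sub, Algebra.algebraMap_eq_smul_one] at hneg
  obtain ⟨u, hu⟩ := hu
  have hle : ∀ m, 1 ≤ ‖(↑u⁻¹ : H →L[ℂ] H)‖ * ‖(S - z • 1) (x m)‖ := by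
    intro m
    have hinv : (↑u⁻¹ : H →L[ℂ] H) ((S - z • 1) (x m)) = x m := by
      rw [← hu, ← mul_apply_eq_comp, Units.inv_mul, one_apply_eq_self]
    have := (↑u⁻¹ : H →L[ℂ] H).le_opNorm ((S - z • 1) (x m))
    rwa [hinv, hx1] at this
  have hlim := ge_of_tendsto' (hx.const_mul ‖(↑u⁻¹ : H →L[ℂ] H)‖) hle
  norm_num at hlim

variable [CompleteSpace H]

lemma adjoint_pow_apply_of_eigen {A : H →L[ℂ] H} {w : ℂ} {y : H} (hy : adjoint A y = w • y)
    (k : ℕ) : adjoint (A ^ k) y = w ^ k • y := by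
  rw [← star_eq_adjoint, star_pow, star_eq_adjoint]
  induction k with
  | zero => simp
  | succ k ih =>
    rw [pow_succ, mul_apply_eq_comp, hy, map_smul, ih, smul_smul, pow_succ, mul_comm]

/-- For an `n`-normal operator, injectivity of `A - z` forces injectivity of its adjoint. -/
lemma eq_zero_of_adjoint_apply_eq {n : ℕ} (hn : 1 ≤ n) {A : H →L[ℂ] H}
    (hA : adjoint A * A ^ n = A ^ n * adjoint A) {z : ℂ}
    (hinj : Function.Injective ⇑(A - z • (1 : H →L[ℂ] H))) {y : H}
    (hy : adjoint A y = (starRingEnd ℂ z) • y) : y = 0 := by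
  have hnormal : IsStarNormal (A ^ n) := by
    refine ⟨?_⟩
    rw [star_pow, star_eq_adjoint]
    exact Commute.pow_left hA n
  have hnormal' : IsStarNormal (A ^ n - z ^ n • 1) := by
    rw [← Algebra.algebraMap_eq_smul_one]
    refine ⟨?_⟩
    rw [star_sub, ← algebraMap_star_comm]
    exact ((hnormal.star_comm_self.sub_right (Algebra.commutes _ _).symm)).sub_left
      (Algebra.commutes _ _)
  have hAn : (A ^ n - z ^ n • 1) y = 0 := by
    rw [← hnormal'.adjoint_apply_eq_zero_iff, ← star_eq_adjoint, star_sub, star_smul, star_one,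
      star_eq_adjoint, _root_.sub_apply, adjoint_pow_apply_of_eigen hy n]
    simp
  rcases eq_or_ne z 0 with rfl | hz
  · have hpow : Function.Injective (A ^ n) := by
      rw [zero_smul, sub_zero] at hinj
      rw [FunLike.coe_pow_eq_iterate]
      exact hinj.iterate n
    apply hpow
    simpa [zero_pow (by omega : n ≠ 0)] using hAn
  · have hq : (∑ i ∈ Finset.range n, A ^ i * (z • (1 : H →L[ℂ] H)) ^ (n - 1 - i)) y = 0 := by
      apply hinj
      have hcomm : Commute A (z • (1 : H →L[ℂ] H)) := (Commute.one_right A).smul_right z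
      rw [← mul_apply_eq_comp, hcomm.mul_geom_sum₂, smul_pow, one_pow, hAn, map_zero]
    have hterm : ∀ i ∈ Finset.range n,
        inner ℂ y ((A ^ i * (z • (1 : H →L[ℂ] H)) ^ (n - 1 - i)) y)
          = z ^ (n - 1) * inner ℂ y y := by
      intro i hi
      have hi' : i + (n - 1 - i) = n - 1 := by
        have := Finset.mem_range.mp hi
        omega
      rw [smul_pow, one_pow, mul_smul_comm, mul_one, _root_.smul_apply,
        inner_smul_right, ← adjoint_inner_left, adjoint_pow_apply_of_eigen hy, inner_smul_left,
        map_pow, Complex.conj_conj, ← mul_assoc, ← pow_add, add_comm, hi']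
    have hsum := congrArg (inner ℂ y) hq
    rw [_root_.sum_apply, inner_sum, Finset.sum_congr rfl hterm, Finset.sum_const,
      Finset.card_range, inner_zero_right, nsmul_eq_mul] at hsum
    have hn0 : (n : ℂ) ≠ 0 := Nat.cast_ne_zero.mpr (by omega)
    simpa [hn0, hz] using hsum

end NNormal

/-- For an `n`-normal operator `A`, the spectrum equals the approximate point
spectrum: `σ(A) = σ_a(A)`. -/
theorem nNormal_spectrum_eq_approxPointSpectrum {H : Type*} [NormedAddCommGroup H]
    [InnerProductSpace ℂ H] [CompleteSpace H] (n : ℕ) (hn : 1 ≤ n) (A : H →L[ℂ] H)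
    (hA : adjoint A * A ^ n = A ^ n * adjoint A) :
    spectrum ℂ A = approxPointSpectrum A := by
  refine Set.Subset.antisymm (fun z hz => ?_) (approxPointSpectrum_subset_spectrum A)
  by_contra hza
  obtain ⟨K, hK⟩ := exists_antilipschitz_of_notMem hza
  apply hz
  suffices hu : IsUnit (A - z • 1) by
    have hneg := hu.neg
    rwa [neg_sub, ← Algebra.algebraMap_eq_smul_one] at hneg
  rw [ContinuousLinearMap.isUnit_iff_bijective,
    ContinuousLinearMap.bijective_iff_dense_range_and_antilipschitz]
  refine ⟨?_, K, hK⟩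
  rw [Submodule.topologicalClosure_eq_top_iff, ContinuousLinearMap.orthogonal_range,
    Submodule.eq_bot_iff]
  intro y hy
  refine eq_zero_of_adjoint_apply_eq hn hA hK.injective ?_
  have hy' : adjoint (A - z • 1) y = 0 := hy
  rw [← star_eq_adjoint, star_sub, star_smul, star_one] at hy'
  simpa [sub_eq_zero, star_eq_adjoint] using hy'
end

section
/- (Remark 3.1, property Q) Let H be a complex Hilbert space, let n ≥ 1 be an integer, and let A be a bounded linear operator on H that is n-normal, i.e. A* A^n = A^n A*. Then A has property Q: for every complex number λ, the quasi-nilpotent part H_0(A − λ) = {x ∈ H : ‖(A − λ)^m x‖^{1/m} → 0 as m → ∞} is a closed subspace of H. -/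
/-!
The point is that `H₀(A - z) = ker (A - z) ^ n`, which is visibly closed.

If `T` is normal, then `‖T ^ (m + 1) x‖ ^ 2 ≤ ‖T ^ (m + 2) x‖ * ‖T ^ m x‖`, so the orbit of a vector
with `T x ≠ 0` grows at least geometrically and `H₀(T) = ker T`. As `A ^ n - z ^ n` is normal and
equals `q(A) (A - z)` for a polynomial `q`, every `x ∈ H₀(A - z)` satisfies `A ^ n x = z ^ n x`.
For `z = 0` this is the claim. For `z ≠ 0` the polynomial `X ^ n - z ^ n` is separable, so
`a (X - z) + b q = 1` for some `a`, `b`. Hence `y = (A - z) x`, which is killed by `q(A)`, satisfies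
`y = a(A) ^ m (A - z) ^ m y` for all `m`, and the decay of `(A - z) ^ m x` forces `y = 0`.
-/

open ContinuousLinearMap Filter Topology

/-- A root-free form of `‖T ^ m x‖ ^ (1 / m) → 0`. -/
lemma eventually_norm_pow_apply_le {H : Type*} [NormedAddCommGroup H] [InnerProductSpace ℂ H]
    {T : H →L[ℂ] H} {x : H}
    (hx : Tendsto (fun m : ℕ => ‖(T ^ m) x‖ ^ (1 / (m : ℝ))) atTop (nhds 0))
    {ε : ℝ} (hε : 0 < ε) : ∀ᶠ m : ℕ in atTop, ‖(T ^ m) x‖ ≤ ε ^ m := by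
  filter_upwards [hx.eventually (gt_mem_nhds hε), eventually_ge_atTop 1] with m hm h1
  have h := pow_le_pow_left₀ (by positivity) hm.le m
  rwa [one_div, Real.rpow_inv_natCast_pow (norm_nonneg _) (by omega)] at h

/-- The quasi-nilpotent part of a normal operator is contained in its kernel. -/
lemma apply_eq_zero_of_isStarNormal {H : Type*} [NormedAddCommGroup H] [InnerProductSpace ℂ H]
    [CompleteSpace H] {T : H →L[ℂ] H} (hT : IsStarNormal T) {x : H}
    (hx : ∀ ε : ℝ, 0 < ε → ∀ᶠ m : ℕ in atTop, ‖(T ^ m) x‖ ≤ ε ^ m) : T x = 0 := by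
  by_contra hne
  have hx0 : 0 < ‖x‖ := norm_pos_iff.2 fun h => hne (by simp [h])
  have hTx : 0 < ‖T x‖ := norm_pos_iff.2 hne
  have key (y : H) : ‖T y‖ ^ 2 ≤ ‖T (T y)‖ * ‖y‖ := by
    have h1 : ‖T y‖ ^ 2 = ‖inner ℂ (adjoint T (T y)) y‖ := by
      rw [adjoint_inner_left, inner_self_eq_norm_sq_to_K]
      simp
    rw [h1, isStarNormal_iff_norm_eq_adjoint.1 hT (T y)]
    exact norm_inner_le_norm _ _
  set ρ := ‖T x‖ / ‖x‖ with hρ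
  have hρ0 : 0 < ρ := by positivity
  have grow (m : ℕ) : 0 < ‖(T ^ m) x‖ ∧ ρ * ‖(T ^ m) x‖ ≤ ‖(T ^ (m + 1)) x‖ := by
    induction m with
    | zero => simpa [hρ, hx0.ne'] using hx0
    | succ m ih =>
      obtain ⟨h0, h1⟩ := ih
      have hpos : 0 < ‖(T ^ (m + 1)) x‖ := (by positivity : 0 < ρ * ‖(T ^ m) x‖).trans_le h1
      refine ⟨hpos, ?_⟩
      have hk := key ((T ^ m) x)
      have e1 : T ((T ^ m) x) = (T ^ (m + 1)) x := by rw [pow_succ']; rfl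
      have e2 : T ((T ^ (m + 1)) x) = (T ^ (m + 1 + 1)) x := by rw [pow_succ' _ (m + 1)]; rfl
      rw [e1, e2] at hk
      refine le_of_mul_le_mul_right ?_ h0
      nlinarith
  have low (m : ℕ) : ρ ^ m * ‖x‖ ≤ ‖(T ^ m) x‖ := by
    induction m with
    | zero => simp
    | succ m ih =>
      calc ρ ^ (m + 1) * ‖x‖ = ρ * (ρ ^ m * ‖x‖) := by ring
        _ ≤ ρ * ‖(T ^ m) x‖ := by gcongr
        _ ≤ _ := (grow m).2
  have hlim : Tendsto (fun m : ℕ => (1 / 2 : ℝ) ^ m) atTop (nhds 0) :=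
    tendsto_pow_atTop_nhds_zero_of_lt_one (by norm_num) (by norm_num)
  obtain ⟨m, hm, hm'⟩ :=
    ((hx (ρ * (1 / 2)) (by positivity)).and (hlim.eventually (gt_mem_nhds hx0))).exists
  have h := (low m).trans hm
  rw [mul_pow] at h
  exact absurd (le_of_mul_le_mul_left h (pow_pos hρ0 m)) (not_le.2 hm')

/-- A vector of `H₀(T)` that lies in `ker (q T)`, where `a T + b q = 1`, already lies in `ker T`. -/
lemma apply_eq_zero_of_bezout {H : Type*} [NormedAddCommGroup H] [InnerProductSpace ℂ H]
    {T a b q : H →L[ℂ] H} (haT : Commute a T) (hb : a * T + b * q = 1) {x : H}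
    (hx : ∀ ε : ℝ, 0 < ε → ∀ᶠ m : ℕ in atTop, ‖(T ^ m) x‖ ≤ ε ^ m) (hq : q (T x) = 0) :
    T x = 0 := by
  have h1 : (a * T) (T x) = T x := by
    have h := congrArg (fun S : H →L[ℂ] H => S (T x)) hb
    simpa [hq] using h
  have h2 (m : ℕ) : ((a * T) ^ m) (T x) = T x := by
    induction m with
    | zero => simp
    | succ m ih => rw [pow_succ, mul_apply_eq_comp, h1, ih]
  have bound (m : ℕ) : ‖T x‖ ≤ (‖a‖ + 1) ^ m * (‖T‖ * ‖(T ^ m) x‖) := by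
    have e : T x = (a ^ m) (T ((T ^ m) x)) := by
      conv_lhs => rw [← h2 m, haT.mul_pow]
      rw [mul_apply_eq_comp, ← mul_apply_eq_comp (T ^ m) T, ← pow_succ, pow_succ', mul_apply_eq_comp]
    calc ‖T x‖ = ‖(a ^ m) (T ((T ^ m) x))‖ := by rw [← e]
      _ ≤ ‖a ^ m‖ * ‖T ((T ^ m) x)‖ := le_opNorm _ _
      _ ≤ (‖a‖ + 1) ^ m * (‖T‖ * ‖(T ^ m) x‖) := by
        gcongr
        · rcases Nat.eq_zero_or_pos m with rfl | hm
          · rw [pow_zero, pow_zero]; exact norm_id_le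
          · exact (norm_pow_le' a hm).trans (by gcongr; linarith)
        · exact le_opNorm _ _
  have hlim : Tendsto (fun m : ℕ => ‖T‖ * (1 / 2 : ℝ) ^ m) atTop (nhds 0) := by
    simpa using (tendsto_pow_atTop_nhds_zero_of_lt_one (r := (1 / 2 : ℝ))
      (by norm_num) (by norm_num)).const_mul ‖T‖
  have ha : 0 < ‖a‖ + 1 := by positivity
  refine norm_le_zero_iff.1 (ge_of_tendsto hlim ?_)
  filter_upwards [hx (1 / 2 / (‖a‖ + 1)) (by positivity)] with m hm
  calc ‖T x‖ ≤ (‖a‖ + 1) ^ m * (‖T‖ * ‖(T ^ m) x‖) := bound m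
    _ ≤ (‖a‖ + 1) ^ m * (‖T‖ * (1 / 2 / (‖a‖ + 1)) ^ m) := by gcongr
    _ = ‖T‖ * (1 / 2 : ℝ) ^ m := by rw [div_pow (1 / 2 : ℝ)]; field_simp

/-- Remark 3.1, property Q: For an `n`-normal operator `A` and every `z : ℂ`,
the quasi-nilpotent part `H₀(A - z)` is a closed subset of `H`. -/
theorem nNormal_propertyQ {H : Type*} [NormedAddCommGroup H] [InnerProductSpace ℂ H]
    [CompleteSpace H] (n : ℕ) (hn : 1 ≤ n) (A : H →L[ℂ] H)
    (hA : adjoint A * A ^ n = A ^ n * adjoint A) :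
    ∀ z : ℂ, IsClosed
      {x : H | Tendsto (fun m : ℕ => ‖((A - z • 1) ^ m) x‖ ^ (1 / (m : ℝ))) atTop (nhds 0)} := by
  intro z
  suffices h : {x : H | Tendsto (fun m : ℕ => ‖((A - z • 1) ^ m) x‖ ^ (1 / (m : ℝ)))
      atTop (nhds 0)} = {x : H | ((A - z • 1) ^ n) x = 0} by
    rw [h]
    exact isClosed_eq ((A - z • 1) ^ n).continuous continuous_const
  ext x
  simp only [Set.mem_ofPred_eq]
  constructor
  · intro hx
    replace hx := fun ε (hε : (0 : ℝ) < ε) => eventually_norm_pow_apply_le hx hε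
    obtain ⟨q, hq⟩ : (Polynomial.X - Polynomial.C z) ∣
        (Polynomial.X ^ n - Polynomial.C (z ^ n) : Polynomial ℂ) := by
      rw [Polynomial.C_pow]
      exact sub_dvd_pow_sub_pow _ _ n
    have hT : Polynomial.aeval A (Polynomial.X - Polynomial.C z) = A - z • 1 := by
      simp [Algebra.algebraMap_eq_smul_one]
    have hfac : A ^ n - z ^ n • 1 = Polynomial.aeval A q * (A - z • 1) := by
      rw [← hT, ← map_mul, mul_comm, ← hq]
      simp [Algebra.algebraMap_eq_smul_one, smul_pow]
    have hcomm (p : Polynomial ℂ) : Commute (Polynomial.aeval A p) (A - z • 1) := by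
      rw [← hT]
      exact (Commute.all p _).map (Polynomial.aeval A)
    have hN : IsStarNormal (A ^ n - z ^ n • 1) := by
      have h : Commute (star A) (A ^ n) := hA
      have h' : Commute (star (A ^ n)) (A ^ n) := by
        rw [star_pow]; exact h.pow_left n
      constructor
      rw [star_sub, star_smul, star_one]
      exact ((h'.sub_right ((Commute.one_right _).smul_right _)).sub_left
        ((Commute.one_left _).smul_left _))
    have hNx : (A ^ n - z ^ n • 1) x = 0 := by
      apply apply_eq_zero_of_isStarNormal hN
      intro ε hε
      set c := ‖Polynomial.aeval A q‖ + 1 with hc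
      have hc0 : 0 < c := by positivity
      filter_upwards [hx (ε / c) (by positivity), eventually_ge_atTop 1] with m hm hm1
      rw [hfac, (hcomm q).mul_pow, mul_apply_eq_comp]
      calc _ ≤ ‖Polynomial.aeval A q ^ m‖ * ‖((A - z • 1) ^ m) x‖ := le_opNorm _ _
        _ ≤ c ^ m * (ε / c) ^ m := by
          gcongr
          exact (norm_pow_le' _ hm1).trans (by gcongr; linarith)
        _ = ε ^ m := by rw [← mul_pow, mul_div_cancel₀ _ hc0.ne']
    rcases eq_or_ne z 0 with rfl | hz
    · simpa [show n ≠ 0 by omega] using hNx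
    · have hsep : (Polynomial.X ^ n - Polynomial.C (z ^ n) : Polynomial ℂ).Separable :=
        Polynomial.separable_X_pow_sub_C _ (by exact_mod_cast (by omega : n ≠ 0)) (pow_ne_zero n hz)
      rw [hq] at hsep
      obtain ⟨a, b, hab⟩ := hsep.isCoprime
      have hb := congrArg (Polynomial.aeval A) hab
      rw [map_add, map_mul, map_mul, map_one, hT] at hb
      have h0 : (A - z • 1) x = 0 := by
        refine apply_eq_zero_of_bezout (hcomm a) hb hx ?_
        rwa [← mul_apply_eq_comp, ← hfac]
      obtain ⟨k, rfl⟩ : ∃ k, n = k + 1 := ⟨n - 1, by omega⟩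
      rw [pow_succ, mul_apply_eq_comp, h0, map_zero]
  · intro hx
    refine tendsto_const_nhds.congr' ?_
    filter_upwards [eventually_ge_atTop n] with m hm
    have h0 : ((A - z • 1) ^ m) x = 0 := by
      rw [← Nat.sub_add_cancel hm, pow_add, mul_apply_eq_comp, hx, map_zero]
    -- The exponent must be nonzero here, since `0 ^ 0 = 1`; this is where `1 ≤ m` enters.
    rw [h0, norm_zero, Real.zero_rpow]
    have : (m : ℝ) ≠ 0 := by exact_mod_cast (by omega : m ≠ 0)
    positivity
end

section
/- Let H be a complex Hilbert space, let n ≥ 1 be an integer, and let A be a bounded linear operator on H that is n-normal, i.e. A* A^n = A^n A*. Suppose the spectrum of A is contained in an angle with vertex at the origin of width less than 2π/n, i.e. there exist θ ∈ ℝ and 0 ≤ w < 2π/n such that every nonzero z ∈ σ(A) can be written z = r·e^{iφ} with r > 0 and φ ∈ [θ, θ + w]. Then every eigenvalue λ ≠ 0 of A is a normal eigenvalue: if Ax = λx then A*x = (conj λ)x. -/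
/-!
Let `A x = z x` with `z ≠ 0`, and let `M` be the kernel of `A ^ n - z ^ n`. Since `A*` commutes with
`A ^ n`, the subspace `M` is invariant under `A*`. On the other hand `A` acts on `M` as the scalar
`z`: in the factorization `A ^ n - z ^ n = p(A) (A - z)`, with `p = ∑ X ^ i z ^ (n - 1 - i)`, the zeros
of `p` are the `n`-th roots of `z ^ n` other than `z`. These lie outside `σ(A)`, because a sector
of width less than `2π/n` contains at most one of the roots (`eq_of_pow_eq_of_sector`), so `p(A)` is
invertible by the spectral mapping theorem. Hence `A (A* x) = z (A* x)`, and
`‖A* x - conj z x‖² = ⟪x, (A - z) (A* x - conj z x)⟫ = 0`.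
-/

theorem eq_of_pow_eq_of_sector {n : ℕ} (hn : 1 ≤ n) {θ w : ℝ} (hw : w < 2 * Real.pi / n)
    {r φ s ψ : ℝ} (hr : 0 < r) (hs : 0 < s) (hφ : φ ∈ Set.Icc θ (θ + w))
    (hψ : ψ ∈ Set.Icc θ (θ + w))
    (h : ((r : ℂ) * Complex.exp (φ * Complex.I)) ^ n =
      ((s : ℂ) * Complex.exp (ψ * Complex.I)) ^ n) :
    (r : ℂ) * Complex.exp (φ * Complex.I) = (s : ℂ) * Complex.exp (ψ * Complex.I) := by
  have hn0 : n ≠ 0 := by omega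
  have hnpos : (0 : ℝ) < n := by exact_mod_cast hn
  have hrs : r = s := by
    have h1 := congrArg norm h
    simp only [norm_pow, norm_mul, Complex.norm_exp_ofReal_mul_I, mul_one, Complex.norm_real,
      Real.norm_eq_abs, abs_of_pos hr, abs_of_pos hs] at h1
    exact (pow_left_inj₀ hr.le hs.le hn0).1 h1
  subst hrs
  have hr' : (r : ℂ) ^ n ≠ 0 := pow_ne_zero _ (by exact_mod_cast hr.ne')
  rw [mul_pow, mul_pow, ← Complex.exp_nat_mul, ← Complex.exp_nat_mul] at h
  obtain ⟨m, hm⟩ := Complex.exp_eq_exp_iff_exists_int.1 (mul_left_cancel₀ hr' h)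
  have hm' : (n : ℝ) * (φ - ψ) = m * (2 * Real.pi) := by
    have := congrArg Complex.im hm
    simp at this
    linarith
  rw [lt_div_iff₀ hnpos] at hw
  have hpi := Real.pi_pos
  obtain ⟨h1, h2⟩ := hφ
  obtain ⟨h3, h4⟩ := hψ
  have hlt : (m : ℝ) < 1 := by nlinarith
  have hgt : (-1 : ℝ) < m := by nlinarith
  have hm0 : m = 0 := by
    have a : m < 1 := by exact_mod_cast hlt
    have b : -1 < m := by exact_mod_cast hgt
    omega
  subst hm0
  have : φ = ψ := by
    have : (n : ℝ) * (φ - ψ) = 0 := by simpa using hm'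
    have := (mul_eq_zero.1 this).resolve_left hnpos.ne'
    linarith
  rw [this]

open Polynomial in
/-- If `z ≠ 0` is the only `n`-th root of `z ^ n` in the spectrum of `A`, then `A` acts as the
scalar `z` on the kernel of `A ^ n - z ^ n`. -/
theorem apply_eq_smul_of_pow_apply_eq {H : Type*} [NormedAddCommGroup H] [InnerProductSpace ℂ H]
    {n : ℕ} (hn : 1 ≤ n) {A : H →L[ℂ] H} {z : ℂ} (hz : z ≠ 0) (hzA : z ∈ spectrum ℂ A)
    (huniq : ∀ k ∈ spectrum ℂ A, k ^ n = z ^ n → k = z) {y : H}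
    (hy : (A ^ n) y = z ^ n • y) : A y = z • y := by
  set p : ℂ[X] := ∑ i ∈ Finset.range n, X ^ i * C z ^ (n - 1 - i) with hp
  have hpmul : p * (X - C z) = X ^ n - C z ^ n := (Commute.all _ _).geom_sum₂_mul n
  have hunit : IsUnit (aeval A p) := by
    by_contra hnu
    have h0 : (0 : ℂ) ∈ spectrum ℂ (aeval A p) := (spectrum.zero_mem_iff ℂ).2 hnu
    rw [spectrum.map_polynomial_aeval_of_nonempty A p ⟨z, hzA⟩] at h0
    obtain ⟨k, hk, hk0⟩ := h0
    replace hk0 : eval k p = 0 := hk0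
    have hkn : k ^ n = z ^ n := by
      have := congrArg (eval k) hpmul
      simp only [eval_mul, hk0, zero_mul, eval_sub, eval_pow, eval_X, eval_C] at this
      exact (sub_eq_zero.1 this.symm)
    obtain rfl := huniq k hk hkn
    -- `z` is a simple root of `X ^ n - z ^ n`: `p(z) = n z ^ (n - 1) ≠ 0`.
    have hval : eval k p = n * k ^ (n - 1) := by
      simp only [hp, eval_finsetSum, eval_mul, eval_pow, eval_X, eval_C]
      exact geom_sum₂_self k n
    rw [hk0] at hval
    have hn' : (n : ℂ) ≠ 0 := by exact_mod_cast (by omega : n ≠ 0)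
    exact mul_ne_zero hn' (pow_ne_zero _ hz) hval.symm
  have hA : (aeval A p) (A y - z • y) = 0 := by
    have := congrArg (fun T : H →L[ℂ] H => T y) (congrArg (aeval A) hpmul)
    have hXn : aeval A (X ^ n - C z ^ n : ℂ[X]) = A ^ n - z ^ n • 1 := by
      rw [← C_pow, map_sub, map_pow, aeval_X, aeval_C, Algebra.algebraMap_eq_smul_one]
    rw [hXn] at this
    simpa [Algebra.algebraMap_eq_smul_one, hy] using this
  obtain ⟨u, hu⟩ := hunit
  have hinv : (↑u⁻¹ : H →L[ℂ] H) ((u : H →L[ℂ] H) (A y - z • y)) = A y - z • y := by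
    rw [← mul_apply_eq_comp, Units.inv_mul, one_apply_eq_self]
  rw [hu, hA, map_zero] at hinv
  exact sub_eq_zero.1 hinv.symm

open ContinuousLinearMap Filter Topology

/-- If `A` is `n`-normal and `σ(A)` is contained in an angle with vertex at the
origin of width less than `2π/n`, then every nonzero eigenvalue of `A` is a normal
eigenvalue: `A x = z x` implies `A* x = conj z • x`. -/
theorem nNormal_sector_normal_eigenvalues {H : Type*} [NormedAddCommGroup H]
    [InnerProductSpace ℂ H] [CompleteSpace H] (n : ℕ) (hn : 1 ≤ n) (A : H →L[ℂ] H)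
    (hA : adjoint A * A ^ n = A ^ n * adjoint A)
    (hangle : ∃ θ w : ℝ, 0 ≤ w ∧ w < 2 * Real.pi / n ∧
      ∀ z ∈ spectrum ℂ A, z ≠ 0 → ∃ r φ : ℝ, 0 < r ∧ φ ∈ Set.Icc θ (θ + w) ∧
        z = (r : ℂ) * Complex.exp (φ * Complex.I)) :
    ∀ z : ℂ, z ≠ 0 → ∀ x : H, A x = z • x → adjoint A x = (starRingEnd ℂ z) • x := by
  intro z hz x hx
  by_cases hx0 : x = 0
  · simp [hx0]
  obtain ⟨θ, w, -, hw, hsec⟩ := hangle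
  have hzA : z ∈ spectrum ℂ A := by
    rw [spectrum.mem_iff]
    rintro ⟨u, hu⟩
    have h0 : (u : H →L[ℂ] H) x = 0 := by
      simp [hu, Algebra.algebraMap_eq_smul_one, hx]
    apply hx0
    have hinv : (↑u⁻¹ : H →L[ℂ] H) ((u : H →L[ℂ] H) x) = x := by
      rw [← mul_apply_eq_comp, Units.inv_mul, one_apply_eq_self]
    rw [← hinv, h0, map_zero]
  have huniq : ∀ k ∈ spectrum ℂ A, k ^ n = z ^ n → k = z := by
    intro k hk hkn
    have hk0 : k ≠ 0 := by
      rintro rfl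
      rw [zero_pow (by omega)] at hkn
      exact pow_ne_zero n hz hkn.symm
    obtain ⟨r, φ, hr, hφ, rfl⟩ := hsec k hk hk0
    obtain ⟨s, ψ, hs, hψ, rfl⟩ := hsec z hzA hz
    exact eq_of_pow_eq_of_sector hn hw hr hs hφ hψ hkn
  have hpow : ∀ m : ℕ, (A ^ m) x = z ^ m • x := by
    intro m
    induction m with
    | zero => simp
    | succ m ih => rw [pow_succ, mul_apply_eq_comp, hx, map_smul, ih, smul_smul, pow_succ']
  have hM : (A ^ n) (adjoint A x) = z ^ n • adjoint A x := by
    rw [← mul_apply_eq_comp, ← hA, mul_apply_eq_comp, hpow, map_smul]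
  have hAA : A (adjoint A x) = z • adjoint A x :=
    apply_eq_smul_of_pow_apply_eq hn hz hzA huniq hM
  set v := adjoint A x - (starRingEnd ℂ z) • x with hv
  have hAv : A v = z • v := by
    rw [hv, map_sub, map_smul, hAA, hx, smul_sub, smul_comm]
  have hvv : inner ℂ v v = 0 := by
    conv_lhs => rw [hv]
    rw [inner_sub_left, adjoint_inner_left, hAv, inner_smul_left, inner_smul_right]
    simp [← hv]
  exact sub_eq_zero.1 (inner_self_eq_zero.1 hvv)
end

section
/- (Theorem 3.3, part for A) Let H be a complex Hilbert space, let n ≥ 1 be an integer, and let A be a bounded linear operator on H that is n-normal, i.e. A* A^n = A^n A*. Then A satisfies Bishop's property (β): for every open set U ⊆ ℂ and every sequence (f_k) of analytic functions f_k : U → H such that z ↦ (A − z)f_k(z) converges to 0 uniformly on every compact subset of U, the functions f_k converge to 0 uniformly on every compact subset of U. -/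
/-!
Put `N = A ^ n`; it is normal, so `‖(N - w)† x‖ = ‖(N - w) x‖` for every scalar `w`. Since
`N - z ^ n` factors through `A - z`, the functions `h_k z = (N† - conj z ^ n) (f_k z)` tend to `0`
uniformly on compact subsets of `U`.

On the circle `|z - a| = r` one has `(z - a) * conj z = conj a * (z - a) + r ^ 2`, so there
`(z - a) ^ n • h_k z` agrees with the holomorphic function
`(z - a) ^ n • N† (f_k z) - (conj a * (z - a) + r ^ 2) ^ n • f_k z`, whose value at `a` is
`-r ^ (2 * n) • f_k a` because `n ≥ 1`. The maximum principle gives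
`‖f_k a‖ ≤ r ^ (-n) * sup_{|z - a| = r} ‖h_k z‖`, with a radius `r` that can be chosen uniformly for
`a` in a compact subset of `U`.
-/

open ContinuousLinearMap Filter Topology

/-- Bishop's property (β) for a bounded operator `S` on a complex Hilbert space. -/
def BishopPropertyBeta {H : Type*} [NormedAddCommGroup H] [InnerProductSpace ℂ H]
    (S : H →L[ℂ] H) : Prop :=
  ∀ (U : Set ℂ), IsOpen U → ∀ f : ℕ → ℂ → H, (∀ k, DifferentiableOn ℂ (f k) U) →
    (∀ K ⊆ U, IsCompact K →
      TendstoUniformlyOn (fun k z => (S - z • 1) (f k z)) (fun _ => 0) atTop K) →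
    ∀ K ⊆ U, IsCompact K → TendstoUniformlyOn (fun k z => f k z) (fun _ => 0) atTop K

open ComplexConjugate in
/-- The maximum principle applied to the holomorphic function agreeing on the circle `|z - a| = r`
with `(z - a) ^ n • (M (f z) - conj z ^ n • f z)`. -/
lemma norm_center_le_of_conj_pow {H : Type*} [NormedAddCommGroup H] [InnerProductSpace ℂ H]
    {n : ℕ} (hn : 1 ≤ n) (M : H →L[ℂ] H) (f : ℂ → H) (a : ℂ) {r C : ℝ} (hr : 0 < r)
    (hf : DifferentiableOn ℂ f (Metric.closedBall a r))
    (hC : ∀ z ∈ Metric.sphere a r, ‖M (f z) - (conj z) ^ n • f z‖ ≤ C) :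
    r ^ n * ‖f a‖ ≤ C := by
  set F : ℂ → H := fun z => (z - a) ^ n • M (f z) - (conj a * (z - a) + r ^ 2) ^ n • f z with hF
  have hFd : DifferentiableOn ℂ F (Metric.closedBall a r) := by
    have h1 : DifferentiableOn ℂ (fun z => M (f z)) (Metric.closedBall a r) :=
      M.differentiable.comp_differentiableOn hf
    have h2 : Differentiable ℂ (fun z : ℂ => (z - a) ^ n) := by fun_prop
    have h3 : Differentiable ℂ (fun z : ℂ => (conj a * (z - a) + (r : ℂ) ^ 2) ^ n) := by fun_prop
    exact (h2.differentiableOn.smul h1).sub (h3.differentiableOn.smul hf)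
  have hFc : DiffContOnCl ℂ F (Metric.ball a r) := by
    apply DifferentiableOn.diffContOnCl
    rwa [closure_ball a hr.ne']
  have hbd : ∀ z ∈ frontier (Metric.ball a r), ‖F z‖ ≤ r ^ n * C := by
    intro z hz
    rw [frontier_ball a hr.ne'] at hz
    have hzr : ‖z - a‖ = r := by simpa [dist_eq_norm] using hz
    have hcirc : conj a * (z - a) + (r : ℂ) ^ 2 = (z - a) * conj z := by
      rw [← hzr, ← Complex.mul_conj', map_sub]
      ring
    have : F z = (z - a) ^ n • (M (f z) - (conj z) ^ n • f z) := by
      simp only [hF, hcirc, mul_pow, smul_sub, smul_smul]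
    rw [this, norm_smul, norm_pow, hzr]
    exact mul_le_mul_of_nonneg_left (hC z hz) (by positivity)
  have key := Complex.norm_le_of_forall_mem_frontier_norm_le Metric.isBounded_ball hFc hbd
    (subset_closure (Metric.mem_ball_self hr))
  have hFa : ‖F a‖ = r ^ n * (r ^ n * ‖f a‖) := by
    have hn0 : n ≠ 0 := by omega
    simp only [hF, sub_self, zero_pow hn0, zero_smul, mul_zero, zero_add, zero_sub, norm_neg,
      norm_smul, norm_pow, Complex.norm_real, Real.norm_of_nonneg hr.le]
    ring
  rw [hFa] at key
  exact le_of_mul_le_mul_left key (by positivity)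

open ComplexConjugate in
/-- For normal `A ^ n`, the adjoint of `A ^ n - z ^ n` is controlled by `A - z`, which divides
`A ^ n - z ^ n`. -/
lemma norm_adjoint_pow_sub_le {H : Type*} [NormedAddCommGroup H] [InnerProductSpace ℂ H]
    [CompleteSpace H] (n : ℕ) (A : H →L[ℂ] H)
    (hA : adjoint A * A ^ n = A ^ n * adjoint A) (z : ℂ) (x : H) :
    ‖adjoint (A ^ n) x - (conj z) ^ n • x‖ ≤
      ‖∑ i ∈ Finset.range n, A ^ i * (z • (1 : H →L[ℂ] H)) ^ (n - 1 - i)‖ *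
        ‖(A - z • (1 : H →L[ℂ] H)) x‖ := by
  set T : H →L[ℂ] H := A ^ n - (z • (1 : H →L[ℂ] H)) ^ n with hT
  have hfac : (∑ i ∈ Finset.range n, A ^ i * (z • (1 : H →L[ℂ] H)) ^ (n - 1 - i)) *
      (A - z • (1 : H →L[ℂ] H)) = T :=
    Commute.geom_sum₂_mul ((Commute.one_right A).smul_right z) n
  have hstar : star T = star (A ^ n) - (conj z ^ n) • (1 : H →L[ℂ] H) := by
    simp [hT, smul_pow]
  have hcomm : Commute (star (A ^ n)) (A ^ n) := by
    rw [star_pow]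
    exact Commute.pow_left (show Commute (star A) (A ^ n) from hA) n
  have hnormal : IsStarNormal T := by
    refine ⟨?_⟩
    rw [hstar]
    simp only [hT, smul_pow, one_pow]
    exact (hcomm.sub_left ((Commute.one_left _).smul_left _)).sub_right
      ((Commute.one_right _).smul_right _)
  have heq : adjoint (A ^ n) x - (conj z) ^ n • x = adjoint T x := by
    rw [← star_eq_adjoint T, hstar, star_eq_adjoint]
    simp
  rw [heq, ← isStarNormal_iff_norm_eq_adjoint.mp hnormal x, ← hfac]
  exact le_opNorm (∑ i ∈ Finset.range n, A ^ i * (z • (1 : H →L[ℂ] H)) ^ (n - 1 - i)) _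

/-- Theorem 3.3, part for `A`: An `n`-normal operator `A` satisfies Bishop's
property (β). -/
theorem nNormal_bishopBeta {H : Type*} [NormedAddCommGroup H] [InnerProductSpace ℂ H]
    [CompleteSpace H] (n : ℕ) (hn : 1 ≤ n) (A : H →L[ℂ] H)
    (hA : adjoint A * A ^ n = A ^ n * adjoint A) :
    BishopPropertyBeta A := by
  intro U hU f hf hlim K hKU hK
  obtain ⟨r, hr, hrU⟩ := hK.exists_cthickening_subset_open hU hKU
  have hK' : IsCompact (Metric.cthickening r K) := hK.cthickening
  have hcont : Continuous fun z : ℂ =>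
      ∑ i ∈ Finset.range n, A ^ i * (z • (1 : H →L[ℂ] H)) ^ (n - 1 - i) := by
    fun_prop
  obtain ⟨C, hC⟩ := hK'.exists_bound_of_continuousOn hcont.continuousOn
  -- `|C| + 1` serves as the bound, as `C` may fail to be positive.
  have hC' := hlim _ hrU hK'
  rw [Metric.tendstoUniformlyOn_iff] at hC' ⊢
  intro ε hε
  have hD : 0 < |C| + 1 := by positivity
  filter_upwards [hC' (r ^ n * (ε / 2) / (|C| + 1)) (by positivity)] with k hk a ha
  have hball : Metric.closedBall a r ⊆ Metric.cthickening r K :=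
    Metric.closedBall_subset_cthickening ha r
  have hmain := norm_center_le_of_conj_pow hn (adjoint (A ^ n)) (f k) a (C := r ^ n * (ε / 2)) hr
    ((hf k).mono (hball.trans hrU)) fun z hz => by
      have hz' := hball (Metric.sphere_subset_closedBall hz)
      have h1 := hk z hz'
      rw [dist_zero_left] at h1
      calc _ ≤ _ := norm_adjoint_pow_sub_le n A hA z (f k z)
        _ ≤ (|C| + 1) * (r ^ n * (ε / 2) / (|C| + 1)) := by
          gcongr
          exact (hC z hz').trans ((le_abs_self C).trans (by linarith))
        _ = r ^ n * (ε / 2) := by field_simp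
  have : ‖f k a‖ ≤ ε / 2 := le_of_mul_le_mul_left hmain (by positivity)
  rw [dist_zero_left]
  linarith
end

section
/- (Theorem 3.3, part for A*) Let H be a complex Hilbert space, let n ≥ 1 be an integer, and let A be a bounded linear operator on H that is n-normal, i.e. A* A^n = A^n A*. Then the adjoint A* satisfies Bishop's property (β): for every open set U ⊆ ℂ and every sequence (f_k) of analytic functions f_k : U → H such that z ↦ (A* − z)f_k(z) converges to 0 uniformly on every compact subset of U, the functions f_k converge to 0 uniformly on every compact subset of U. -/
/-!
Put `S = A*` and `N = S ^ n`. Since `A* A ^ n = A ^ n A*`, the operator `N` is normal, so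
`‖(N - μ)* x‖ = ‖(N - μ) x‖` for all `μ` and `x`; hence two approximate eigenvectors of `N` for
separated approximate eigenvalues are almost orthogonal
(`norm_sub_mul_norm_inner_le_of_isStarNormal`).

Let `f` be holomorphic near a closed disc of radius `R` about `p`, with
`‖(N - z ^ n) f z‖ ≤ ε` there, and suppose that `z ↦ z ^ n` is bounded below by
`c > 0` on differences in this disc. The maximum principle, applied to `⟪f w, f z⟫` in each variable
on two concentric circles, bounds `‖f z₀‖ ^ 2` by almost orthogonality of the values of `f` on
different circles. Taking for `z₀` a maximum point of `(R - dist z p) * ‖f z‖` turns this into the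
estimate `(R - dist z p) * ‖f z‖ ≤ 16 ε / c`, in which no a priori bound on `f` enters
(`weighted_norm_le`).

If `(S - z) f_k → 0` locally uniformly, then so does
`(N - z ^ n) f_k = (∑ S ^ i z ^ (n - 1 - i)) (S - z) f_k`. As `z ↦ z ^ n` is locally bounded below
on differences away from `0`, this gives `f_k → 0` locally uniformly on `U \ {0}`; near `0` the
convergence follows from that on a circle about `0`, by the maximum principle.
-/

open ContinuousLinearMap Filter Topology

section Helpers

variable {H : Type*} [NormedAddCommGroup H] [InnerProductSpace ℂ H]

/-- Approximate eigenvectors of a normal operator for distinct approximate eigenvalues are almost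
orthogonal, because `y` is also an approximate eigenvector of `N*` for `conj b`. -/
lemma norm_sub_mul_norm_inner_le_of_isStarNormal [CompleteSpace H] {N : H →L[ℂ] H}
    (hN : IsStarNormal N) {a b : ℂ} {x y : H} {ε : ℝ}
    (hx : ‖(N - a • 1) x‖ ≤ ε) (hy : ‖(N - b • 1) y‖ ≤ ε) :
    ‖a - b‖ * ‖inner ℂ y x‖ ≤ ε * (‖x‖ + ‖y‖) := by
  have hNb : IsStarNormal (N - b • (1 : H →L[ℂ] H)) := by
    constructor
    have h := hN.star_comm_self.eq
    simp only [Commute, SemiconjBy, star_sub, star_smul, star_one, sub_mul, mul_sub, smul_mul_assoc,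
      mul_smul_comm, one_mul, mul_one, h, smul_sub, smul_smul, mul_comm b]
    abel
  have hy' : ‖adjoint (N - b • (1 : H →L[ℂ] H)) y‖ ≤ ε := by
    rwa [← isStarNormal_iff_norm_eq_adjoint.mp hNb y]
  have key : (b - a) * inner ℂ y x =
      inner ℂ y ((N - a • (1 : H →L[ℂ] H)) x)
        - inner ℂ (adjoint (N - b • (1 : H →L[ℂ] H)) y) x := by
    rw [adjoint_inner_left]
    simp only [sub_apply, smul_apply, one_apply_eq_self, inner_sub_right, inner_smul_right]
    ring
  have h1 := norm_inner_le_norm (𝕜 := ℂ) y ((N - a • (1 : H →L[ℂ] H)) x)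
  have h2 := norm_inner_le_norm (𝕜 := ℂ) (adjoint (N - b • (1 : H →L[ℂ] H)) y) x
  rw [norm_sub_rev, ← norm_mul, key]
  refine (norm_sub_le _ _).trans ?_
  nlinarith [norm_nonneg x, norm_nonneg y, mul_le_mul_of_nonneg_left hx (norm_nonneg y),
    mul_le_mul_of_nonneg_right hy' (norm_nonneg x)]

lemma norm_le_of_sphere {E : Type*} [NormedAddCommGroup E] [NormedSpace ℂ E] {g : ℂ → E}
    {z₀ : ℂ} {r B : ℝ} (hr : 0 < r) (hg : DifferentiableOn ℂ g (Metric.closedBall z₀ r))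
    (hB : ∀ z ∈ Metric.sphere z₀ r, ‖g z‖ ≤ B) {z : ℂ} (hz : z ∈ Metric.closedBall z₀ r) :
    ‖g z‖ ≤ B := by
  refine Complex.norm_le_of_forall_mem_frontier_norm_le (U := Metric.ball z₀ r)
    Metric.isBounded_ball ?_ ?_ ?_
  · apply DifferentiableOn.diffContOnCl
    rwa [closure_ball _ hr.ne']
  · rwa [frontier_ball _ hr.ne']
  · rwa [closure_ball _ hr.ne']

/-- A two-circle form of the maximum principle: `‖f z₀‖ ^ 2` is bounded by any bound of the inner
products of values of `f` on two circles about `z₀`. -/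
lemma norm_sq_center_le {f : ℂ → H} {z₀ : ℂ} {r s B : ℝ} (hr : 0 < r) (hs : 0 < s)
    (hfr : DifferentiableOn ℂ f (Metric.closedBall z₀ r))
    (hfs : DifferentiableOn ℂ f (Metric.closedBall z₀ s))
    (hB : ∀ w ∈ Metric.sphere z₀ r, ∀ z ∈ Metric.sphere z₀ s, ‖inner ℂ (f w) (f z)‖ ≤ B) :
    ‖f z₀‖ ^ 2 ≤ B := by
  have hdiff : ∀ (v : H) (t : ℝ), DifferentiableOn ℂ f (Metric.closedBall z₀ t) →
      DifferentiableOn ℂ (fun z => inner ℂ v (f z)) (Metric.closedBall z₀ t) := fun v t h =>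
    (innerSL ℂ v).differentiable.comp_differentiableOn h
  have h1 : ∀ w ∈ Metric.sphere z₀ r, ‖inner ℂ (f w) (f z₀)‖ ≤ B := fun w hw =>
    norm_le_of_sphere hs (hdiff (f w) s hfs) (hB w hw) (Metric.mem_closedBall_self hs.le)
  have h2 : ‖inner ℂ (f z₀) (f z₀)‖ ≤ B :=
    norm_le_of_sphere hr (hdiff (f z₀) r hfr)
      (fun w hw => by rw [norm_inner_symm]; exact h1 w hw) (Metric.mem_closedBall_self hr.le)
  rwa [inner_self_eq_norm_sq_to_K, norm_pow, RCLike.norm_ofReal, abs_norm] at h2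

/-- The weight `R - dist z p` makes the estimate independent of any a priori bound on `f`: at a
maximum point of the weighted norm, the values of `f` on circles of radius comparable to the weight
are controlled by the maximum itself. -/
lemma weighted_norm_le [CompleteSpace H] {N : H →L[ℂ] H} (hN : IsStarNormal N) {h : ℂ → ℂ}
    {f : ℂ → H} {p : ℂ} {R c ε : ℝ} (hR : 0 < R) (hc : 0 < c)
    (hf : DifferentiableOn ℂ f (Metric.closedBall p R))
    (hh : ∀ z ∈ Metric.closedBall p R, ∀ w ∈ Metric.closedBall p R, c * ‖z - w‖ ≤ ‖h z - h w‖)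
    (hε : ∀ z ∈ Metric.closedBall p R, ‖(N - h z • 1) (f z)‖ ≤ ε)
    {z : ℂ} (hz : z ∈ Metric.closedBall p R) :
    (R - dist z p) * ‖f z‖ ≤ 16 * ε / c := by
  have hε0 : 0 ≤ ε := (norm_nonneg _).trans (hε p (Metric.mem_closedBall_self hR.le))
  obtain ⟨z₀, hz₀, hmax⟩ := (isCompact_closedBall p R).exists_isMaxOn
    ⟨p, Metric.mem_closedBall_self hR.le⟩
    (f := fun z => (R - dist z p) * ‖f z‖)
    ((by fun_prop : Continuous fun z => R - dist z p).continuousOn.mul hf.continuousOn.norm)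
  refine (hmax hz).trans ?_
  set d := R - dist z₀ p with hd
  set T := d * ‖f z₀‖ with hT
  change T ≤ _
  have hmax' : ∀ w ∈ Metric.closedBall p R, (R - dist w p) * ‖f w‖ ≤ T := fun w hw => hmax hw
  have hd0 : 0 ≤ d := by simpa [hd] using hz₀
  rcases (mul_nonneg hd0 (norm_nonneg (f z₀))).eq_or_lt with hT0 | hT0
  · rw [hT, ← hT0]; positivity
  have hdpos : 0 < d := hd0.lt_of_ne (by rintro h0; rw [← h0] at hT0; simp at hT0)
  -- On the disc of radius `d / 2` about `z₀` the weight is at least `d / 2`.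
  have hwt : ∀ w, dist w z₀ ≤ d / 2 → w ∈ Metric.closedBall p R ∧ ‖f w‖ ≤ 2 * T / d := by
    intro w hw
    have htri := dist_triangle w z₀ p
    have hw2 : d / 2 ≤ R - dist w p := by linarith
    have hwm : w ∈ Metric.closedBall p R := by
      rw [Metric.mem_closedBall]; linarith
    refine ⟨hwm, ?_⟩
    rw [le_div_iff₀ hdpos]
    nlinarith [hmax' w hwm, mul_le_mul_of_nonneg_right hw2 (norm_nonneg (f w))]
  have hsq : ‖f z₀‖ ^ 2 ≤ 16 * ε * T / (c * d ^ 2) := by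
    refine norm_sq_center_le (r := d / 4) (s := d / 2) (by linarith) (by linarith)
      (hf.mono fun w hw => (hwt w ?_).1) (hf.mono fun w hw => (hwt w ?_).1) ?_
    · rw [Metric.mem_closedBall] at hw; linarith
    · exact hw
    intro w hw z hz
    rw [Metric.mem_sphere] at hw hz
    obtain ⟨hwm, hwf⟩ := hwt w (by linarith)
    obtain ⟨hzm, hzf⟩ := hwt z (by linarith)
    have hsep : d / 4 ≤ ‖z - w‖ := by
      rw [← dist_eq_norm]
      linarith [dist_triangle z w z₀]
    have hsep' : c * (d / 4) ≤ ‖h z - h w‖ :=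
      (mul_le_mul_of_nonneg_left hsep hc.le).trans (hh z hzm w hwm)
    have horth := norm_sub_mul_norm_inner_le_of_isStarNormal hN (hε z hzm) (hε w hwm)
    have hub : c * (d / 4) * ‖inner ℂ (f w) (f z)‖ ≤ ε * (2 * T / d + 2 * T / d) :=
      (mul_le_mul_of_nonneg_right hsep' (norm_nonneg _)).trans
        (horth.trans (mul_le_mul_of_nonneg_left (add_le_add hzf hwf) hε0))
    rw [le_div_iff₀ (by positivity)]
    have e : ε * (2 * T / d + 2 * T / d) * (4 * d) = 16 * ε * T := by field_simp; ring
    nlinarith [mul_le_mul_of_nonneg_right hub (by positivity : 0 ≤ 4 * d)]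
  have hTT : c * T * T ≤ 16 * ε * T := by
    rw [le_div_iff₀ (by positivity)] at hsq
    calc c * T * T = ‖f z₀‖ ^ 2 * (c * d ^ 2) := by rw [hT]; ring
      _ ≤ _ := hsq
  rw [le_div_iff₀ hc, mul_comm]
  exact le_of_mul_le_mul_right hTT hT0

lemma exists_pow_sub_pow_bound {n : ℕ} (hn : 1 ≤ n) {p : ℂ} (hp : p ≠ 0) :
    ∃ c > 0, ∃ δ > 0, ∀ z ∈ Metric.ball p δ, ∀ w ∈ Metric.ball p δ,
      c * ‖z - w‖ ≤ ‖z ^ n - w ^ n‖ := by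
  let G : ℂ × ℂ → ℝ := fun q => ‖∑ i ∈ Finset.range n, q.1 ^ i * q.2 ^ (n - 1 - i)‖
  have hG : Continuous G := by fun_prop
  have hGp : 0 < G (p, p) := by
    have : ∑ i ∈ Finset.range n, p ^ i * p ^ (n - 1 - i) = n * p ^ (n - 1) := by
      rw [Finset.sum_congr rfl (g := fun _ => p ^ (n - 1)) fun i hi => ?_]
      · simp
      · rw [← pow_add]; congr 1; have := Finset.mem_range.mp hi; omega
    simp only [G, this, norm_pos_iff]
    exact mul_ne_zero (by exact_mod_cast (by omega : n ≠ 0)) (pow_ne_zero _ hp)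
  have hev : ∀ᶠ q in 𝓝 (p, p), G (p, p) / 2 < G q :=
    hG.continuousAt.eventually (lt_mem_nhds (by linarith))
  obtain ⟨δ, hδ, hball⟩ := Metric.eventually_nhds_iff_ball.mp hev
  refine ⟨G (p, p) / 2, by linarith, δ, hδ, fun z hz w hw => ?_⟩
  have := hball (z, w) (by rw [← ball_prod_same]; exact ⟨hz, hw⟩)
  rw [← (Commute.all z w).geom_sum₂_mul n, norm_mul]
  exact mul_le_mul_of_nonneg_right this.le (norm_nonneg _)

/-- Factoring out `S - z` bounds `S ^ n - z ^ n` by it, uniformly for `z` in a compact set. -/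
lemma exists_pow_sub_pow_le (S : H →L[ℂ] H) (n : ℕ) {K : Set ℂ} (hK : IsCompact K) :
    ∃ C > 0, ∀ z ∈ K, ∀ x : H, ‖(S ^ n - z ^ n • 1) x‖ ≤ C * ‖(S - z • 1) x‖ := by
  let G : ℂ → H →L[ℂ] H := fun z =>
    ∑ i ∈ Finset.range n, S ^ i * (z • (1 : H →L[ℂ] H)) ^ (n - 1 - i)
  have hG : Continuous G := by fun_prop
  obtain ⟨C, hC⟩ := hK.exists_bound_of_continuousOn hG.continuousOn
  refine ⟨max C 1, by positivity, fun z hz x => ?_⟩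
  have hcomm : Commute S (z • (1 : H →L[ℂ] H)) := (Commute.one_right S).smul_right z
  have e : S ^ n - z ^ n • (1 : H →L[ℂ] H) = G z * (S - z • 1) := by
    rw [hcomm.geom_sum₂_mul n, smul_pow, one_pow]
  rw [e, mul_apply_eq_comp]
  exact ((G z).le_opNorm _).trans
    (mul_le_mul_of_nonneg_right ((hC z hz).trans (le_max_left _ _)) (norm_nonneg _))

lemma tendstoUniformlyOn_zero_iff {E : Type*} [NormedAddCommGroup E] {F : ℕ → ℂ → E} {K : Set ℂ} :
    TendstoUniformlyOn F (fun _ => 0) atTop K ↔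
      ∀ ε > 0, ∀ᶠ k in atTop, ∀ z ∈ K, ‖F k z‖ < ε := by
  simp [Metric.tendstoUniformlyOn_iff]

end Helpers

/-- Theorem 3.3, part for `A*`: The adjoint of an `n`-normal operator `A`
satisfies Bishop's property (β). -/
theorem nNormal_adjoint_bishopBeta {H : Type*} [NormedAddCommGroup H] [InnerProductSpace ℂ H]
    [CompleteSpace H] (n : ℕ) (hn : 1 ≤ n) (A : H →L[ℂ] H)
    (hA : adjoint A * A ^ n = A ^ n * adjoint A) :
    BishopPropertyBeta (adjoint A) := by
  intro U hU f hf hconv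
  have hN : IsStarNormal (adjoint A ^ n) := by
    constructor
    have hs : star (adjoint A ^ n) = A ^ n := by
      rw [star_pow, ← star_eq_adjoint, star_star]
    rw [hs]
    exact ((show Commute (adjoint A) (A ^ n) from hA).pow_left n).symm
  have hoff : ∀ p ∈ U, p ≠ 0 → ∃ t ∈ 𝓝 p, TendstoUniformlyOn f (fun _ => 0) atTop t := by
    intro p hp hp0
    obtain ⟨c, hc, δ, hδ, hcδ⟩ := exists_pow_sub_pow_bound hn hp0
    obtain ⟨ρ, hρ, hρU⟩ := Metric.isOpen_iff.mp hU p hp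
    obtain ⟨R, hR, hRlt⟩ := exists_between (lt_min hδ hρ)
    have hRδ := Metric.closedBall_subset_ball (x := p) (hRlt.trans_le (min_le_left _ _))
    have hRU := (Metric.closedBall_subset_ball (x := p)
      (hRlt.trans_le (min_le_right _ _))).trans hρU
    obtain ⟨C, hC, hCb⟩ := exists_pow_sub_pow_le (adjoint A) n (isCompact_closedBall p R)
    refine ⟨Metric.ball p (R / 2), Metric.ball_mem_nhds _ (by linarith), ?_⟩
    rw [tendstoUniformlyOn_zero_iff]
    intro ε hε
    have hη : 0 < ε * R * c / (64 * C) := by positivity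
    filter_upwards [tendstoUniformlyOn_zero_iff.mp
      (hconv _ hRU (isCompact_closedBall p R)) _ hη] with k hk z hz
    have hzR : z ∈ Metric.closedBall p R :=
      Metric.ball_subset_closedBall (Metric.ball_subset_ball (by linarith) hz)
    have hest := weighted_norm_le hN (h := fun z => z ^ n) hR hc ((hf k).mono hRU)
      (fun z hz w hw => hcδ z (hRδ hz) w (hRδ hw))
      (fun z hz => (hCb z hz (f k z)).trans
        (mul_le_mul_of_nonneg_left (hk z hz).le hC.le)) hzR
    have e : 16 * (C * (ε * R * c / (64 * C))) / c = ε * R / 4 := by field_simp; ring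
    rw [e] at hest
    rw [Metric.mem_ball] at hz
    have h2 : R / 2 * ‖f k z‖ ≤ ε * R / 4 :=
      (mul_le_mul_of_nonneg_right (by linarith) (norm_nonneg _)).trans hest
    have h3 : ‖f k z‖ ≤ ε / 2 := by
      refine le_of_mul_le_mul_left (h2.trans_eq ?_) (by linarith : 0 < R / 2)
      ring
    linarith
  have hU0 : IsOpen (U \ {0}) := hU.sdiff isClosed_singleton
  have hoffK : ∀ K ⊆ U \ {0}, IsCompact K → TendstoUniformlyOn f (fun _ => 0) atTop K :=
    (tendstoLocallyUniformlyOn_iff_forall_isCompact hU0).mp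
      (tendstoLocallyUniformlyOn_of_forall_exists_nhds fun p hp =>
        let ⟨t, ht, h⟩ := hoff p hp.1 hp.2
        ⟨t, mem_nhdsWithin_of_mem_nhds ht, h⟩)
  refine (tendstoLocallyUniformlyOn_iff_forall_isCompact hU).mp
    (tendstoLocallyUniformlyOn_of_forall_exists_nhds fun p hp => ?_)
  rcases eq_or_ne p 0 with rfl | hp0
  · obtain ⟨ρ, hρ, hρU⟩ := Metric.isOpen_iff.mp hU 0 hp
    obtain ⟨R, hR, hRlt⟩ := exists_between hρ
    have hRU := (Metric.closedBall_subset_ball (x := (0 : ℂ)) hRlt).trans hρU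
    refine ⟨Metric.closedBall 0 R,
      mem_nhdsWithin_of_mem_nhds (Metric.closedBall_mem_nhds _ hR), ?_⟩
    have hsph := hoffK (Metric.sphere 0 R)
      (fun z hz => ⟨hRU (Metric.sphere_subset_closedBall hz), fun h0 => by
        rw [Set.mem_singleton_iff.mp h0, Metric.mem_sphere, dist_self] at hz
        exact hR.ne hz⟩)
      (isCompact_sphere 0 R)
    rw [tendstoUniformlyOn_zero_iff] at hsph ⊢
    intro ε hε
    filter_upwards [hsph (ε / 2) (by linarith)] with k hk z hz
    have := norm_le_of_sphere hR ((hf k).mono hRU) (fun w hw => (hk w hw).le) hz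
    linarith
  · obtain ⟨t, ht, h⟩ := hoff p hp hp0
    exact ⟨t, mem_nhdsWithin_of_mem_nhds ht, h⟩
end

section
/- (Corollary 3.3) Let H be a complex Hilbert space, let n ≥ 1 be an integer, and let A be a bounded linear operator on H that is n-normal, i.e. A* A^n = A^n A*. Then A is decomposable: for every pair of open sets U, V ⊆ ℂ with U ∪ V = ℂ, there exist closed subspaces M and N of H, invariant under A, such that M + N = H, the spectrum of the restriction A|_M is contained in U, and the spectrum of the restriction A|_N is contained in V. -/
/-!
Put `T = A ^ n`. It is normal, and both `A` and `A*` commute with it.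

If `A` is invertible, `A` is similar to a normal operator (`exists_similar_normal`). For a normal
operator `N` the continuous functional calculus gives decomposability: the spectral subspace of a
closed set `F` is the common kernel of all `h(N)` with `h` vanishing on `F`; a continuous inverse of
`z - l` near `F` shows that `N - l` is invertible on it when `l ∉ F`, and a partition of unity shows
that two such subspaces span. Both properties pass through the similarity
(`decomposable_of_isUnit`).

In general one of `U`, `V` contains `0`, say `U`. The kernel of `g(T)`, with `g` vanishing exactly on
a small disc about `0`, reduces `A`; on it `‖T‖` is small, so the spectrum of `A` there lies in `U`,
while `T`, hence `A`, is invertible on the orthogonal complement (`exists_reducing_projection`). With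
`E` the projection onto this kernel, `A (1 - E) + E` is an invertible `n`-normal operator that
commutes with `E`, and a decomposition `M + N` for it yields the decomposition
`(1 - E)⁻¹ M + (N ∩ ker E)` for `A` (`decomposable_of_zero_mem`).
-/

open ContinuousLinearMap Filter Topology

/-- The restriction of a bounded operator `A` to an `A`-invariant submodule `M`,
as a continuous linear map `M →L[ℂ] M`. -/
def clmRestrict {H : Type*} [NormedAddCommGroup H] [InnerProductSpace ℂ H]
    (A : H →L[ℂ] H) (M : Submodule ℂ H) (h : ∀ x ∈ M, A x ∈ M) : M →L[ℂ] M :=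
  { toLinearMap := (A : H →ₗ[ℂ] H).restrict h
    cont := Continuous.subtype_mk (A.continuous.comp continuous_subtype_val) _ }

/-! ### Invertible elements with a normal power -/

lemma isStarNormal_pow {R : Type*} [Ring R] [StarRing R] {a : R} {n : ℕ}
    (h : Commute (star a) (a ^ n)) : IsStarNormal (a ^ n) :=
  ⟨by rw [star_pow]; exact h.pow_left n⟩

/-- An invertible `a` such that `a ^ n` commutes with `star a` is similar, via a self-adjoint
`s`, to a normal element. With `q = |a ^ n| ^ (2 / n)`, which is central in the C⋆-algebra generated by `a`,
the positive element `D = ∑ k < n, q ^ (n - 1 - k) * star a ^ k * a ^ k` satisfies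
`star a * D * a = q * D` by telescoping, and `s = √D` works. -/
lemma exists_similar_normal {R : Type*} [CStarAlgebra R] [PartialOrder R] [StarOrderedRing R]
    {a : R} {n : ℕ} (hn : 1 ≤ n) (h : Commute (star a) (a ^ n)) (ha : IsUnit a) :
    ∃ s N : R, IsUnit s ∧ IsSelfAdjoint s ∧ IsStarNormal N ∧ s * a = N * s ∧
      ∀ b, Commute b a → Commute b (star a) → Commute b s := by
  have hT : IsStarNormal (a ^ n) := isStarNormal_pow h
  have hn0 : n ≠ 0 := by omega
  set f : ℂ → ℂ := fun z => ((‖z‖ ^ ((n : ℝ)⁻¹) : ℝ) : ℂ) with hf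
  have hfc : Continuous f := by
    apply Complex.continuous_ofReal.comp
    exact continuous_norm.rpow_const (fun _ => Or.inr (by positivity))
  set r : R := cfc f (a ^ n) with hr
  have hrsa : star r = r := by
    rw [hr, ← cfc_star]
    congr 1
    ext z
    simp [hf]
  have hrpow : r ^ (2 * n) = star (a ^ n) * a ^ n := by
    rw [hr, ← cfc_pow f (2 * n) (a ^ n) hfc.continuousOn]
    conv_rhs => rw [← cfc_id' ℂ (a ^ n), ← cfc_star, ← cfc_mul _ _ (a ^ n)]
    congr 1
    ext z
    have h1 : (‖z‖ ^ ((n : ℝ)⁻¹)) ^ (2 * n) = ‖z‖ ^ 2 := by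
      rw [mul_comm, pow_mul, Real.rpow_inv_natCast_pow (norm_nonneg z) hn0]
    have h2 : star z * z = ((‖z‖ ^ 2 : ℝ) : ℂ) := by
      rw [Complex.star_def, Complex.conj_mul']; push_cast; rfl
    rw [h2, ← h1]
    simp [hf]
  -- Whatever commutes with `a` and `star a` commutes with `r`.
  have hrcomm : ∀ b, Commute b a → Commute b (star a) → Commute b r := by
    intro b hb hb'
    refine (Commute.cfc (hb.pow_right n).symm ?_ f).symm
    rw [star_pow]
    exact (hb'.pow_right n).symm
  have hra : Commute a r := by
    refine (Commute.cfc ((Commute.refl a).pow_left n) ?_ f).symm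
    have := h.star_star
    rw [star_star] at this
    exact this.symm
  have hra' : Commute (star a) r := by
    have := hra.star_star
    rwa [hrsa] at this
  have hru : IsUnit r := by
    have h1 : IsUnit (r ^ (2 * n)) := by
      rw [hrpow]; exact (ha.pow n).star.mul (ha.pow n)
    exact (isUnit_pow_iff (by omega)).1 h1
  set q := r ^ 2 with hq
  have hqa : Commute a q := hra.pow_right 2
  have hqa' : Commute (star a) q := hra'.pow_right 2
  set D : R := ∑ k ∈ Finset.range n, q ^ (n - 1 - k) * (star a ^ k * a ^ k) with hD
  have hqD : Commute q D := by
    refine Commute.sum_right _ _ _ fun k _ => ?_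
    exact ((Commute.refl q).pow_right _).mul_right
      ((hqa'.symm.pow_right k).mul_right (hqa.symm.pow_right k))
  have hterm : ∀ k, q ^ (n - 1 - k) * (star a ^ k * a ^ k) =
      star (r ^ (n - 1 - k) * a ^ k) * (r ^ (n - 1 - k) * a ^ k) := by
    intro k
    have h1 : Commute (star a ^ k) (r ^ (n - 1 - k)) := hra'.pow_pow _ _
    rw [star_mul, star_pow, star_pow, hrsa, hq, ← pow_mul, mul_comm 2, pow_mul, pow_two]
    calc _ = (r ^ (n - 1 - k) * r ^ (n - 1 - k)) * star a ^ k * a ^ k := by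
            simp only [mul_assoc]
      _ = star a ^ k * (r ^ (n - 1 - k) * r ^ (n - 1 - k)) * a ^ k := by
            rw [(h1.mul_right h1).eq]
      _ = _ := by simp only [mul_assoc]
  have hnonneg : ∀ k, 0 ≤ q ^ (n - 1 - k) * (star a ^ k * a ^ k) := fun k => by
    rw [hterm k]; exact star_mul_self_nonneg _
  have hD0 : 0 ≤ D := Finset.sum_nonneg fun k _ => hnonneg k
  have hDu : IsUnit D := by
    -- The term `k = 0` is positive and invertible.
    have hle : q ^ (n - 1 - 0) * (star a ^ 0 * a ^ 0) ≤ D :=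
      Finset.single_le_sum (f := fun k => q ^ (n - 1 - k) * (star a ^ k * a ^ k))
        (fun k _ => hnonneg k) (Finset.mem_range.2 (by omega))
    refine CStarAlgebra.isUnit_of_le _ hle ⟨hnonneg 0, ?_⟩
    simpa using (hru.pow 2).pow (n - 1)
  have htel : star a * D * a = q * D := by
    have h1 : ∀ k ∈ Finset.range n, star a * (q ^ (n - 1 - k) * (star a ^ k * a ^ k)) * a =
        q ^ (n - (k + 1)) * (star a ^ (k + 1) * a ^ (k + 1)) := by
      intro k hk
      have : n - 1 - k = n - (k + 1) := by omega
      rw [this, pow_succ' (star a), pow_succ a, ← mul_assoc (star a), (hqa'.pow_right _).eq]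
      simp only [mul_assoc]
    have h2 : ∀ k ∈ Finset.range n, q * (q ^ (n - 1 - k) * (star a ^ k * a ^ k)) =
        q ^ (n - k) * (star a ^ k * a ^ k) := by
      intro k hk
      have : n - k = (n - 1 - k) + 1 := by have := Finset.mem_range.1 hk; omega
      rw [this, pow_succ', mul_assoc]
    rw [hD, Finset.mul_sum, Finset.sum_mul, Finset.mul_sum, Finset.sum_congr rfl h1,
      Finset.sum_congr rfl h2]
    have h3 := Finset.sum_range_succ (fun k => q ^ (n - k) * (star a ^ k * a ^ k)) n
    rw [Finset.sum_range_succ'] at h3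
    have h4 : q ^ n = star a ^ n * a ^ n := by
      rw [← star_pow, ← hrpow, hq, ← pow_mul]
    simp only [Nat.sub_zero, pow_zero, mul_one, Nat.sub_self, one_mul, h4] at h3
    exact add_right_cancel h3
  set s := CFC.sqrt D with hs
  have hss : s * s = D := CFC.sqrt_mul_sqrt_self D hD0
  have hsu : IsUnit s := (CFC.isUnit_sqrt_iff D hD0).2 hDu
  have hssa : IsSelfAdjoint s := (CFC.sqrt_nonneg D).isSelfAdjoint
  have hscomm : ∀ b, Commute b D → Commute b s := fun b hb =>
    (Commute.cfcₙ_nnreal hb.symm _).symm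
  have hqs : Commute q s := hscomm q hqD
  obtain ⟨u, hu⟩ := hsu
  have hus : star (↑u⁻¹ : R) = ↑u⁻¹ := by
    have : star u = u := by ext; rw [Units.coe_star, hu]; exact hssa
    rw [← Units.coe_star, star_inv, this]
  have hqu : Commute q (↑u⁻¹ : R) := by
    rw [← hu] at hqs
    exact hqs.units_inv_right
  have hN : star (s * a * ↑u⁻¹) * (s * a * ↑u⁻¹) = q := by
    rw [star_mul, star_mul, hus, hssa.star_eq]
    calc _ = ↑u⁻¹ * (star a * (s * s) * a) * ↑u⁻¹ := by simp only [mul_assoc]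
      _ = ↑u⁻¹ * (q * (u * u)) * ↑u⁻¹ := by rw [hss, htel, ← hss, hu]
      _ = (↑u⁻¹ * q) * u * (u * ↑u⁻¹) := by simp only [mul_assoc]
      _ = q := by rw [← hqu.eq]; simp [mul_assoc]
  have hNu : IsUnit (s * a * ↑u⁻¹) := ((hu ▸ u.isUnit).mul ha).mul u⁻¹.isUnit
  have hqN : Commute q (s * a * ↑u⁻¹) := (hqs.mul_right hqa.symm).mul_right hqu
  refine ⟨s, s * a * ↑u⁻¹, hu ▸ u.isUnit, hssa, ⟨?_⟩, ?_, ?_⟩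
  · refine hNu.mul_right_cancel ?_
    rw [hN, mul_assoc (s * a * ↑u⁻¹), hN, hqN.eq]
  · rw [← hu]; simp [mul_assoc]
  · intro b hb hb'
    refine hscomm b (Commute.sum_right _ _ _ fun k _ => ?_)
    exact (((hrcomm b hb hb').pow_right 2).pow_right _).mul_right
      ((hb'.pow_right k).mul_right (hb.pow_right k))

/-! ### Spectral subspaces of normal operators -/

/-- A continuous function inverting `z - l` at distance at least `e` from `l`. -/
lemma exists_continuous_inv_sub (l : ℂ) {e : ℝ} (he : 0 < e) :
    ∃ b : ℂ → ℂ, Continuous b ∧ ∀ z, e ≤ ‖z - l‖ → b z * (z - l) = 1 := by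
  refine ⟨fun z => star (z - l) / ((max ‖z - l‖ e : ℝ) : ℂ) ^ 2, ?_, fun z hz => ?_⟩
  · refine Continuous.div (by fun_prop) (by fun_prop) fun z => ?_
    have : 0 < max ‖z - l‖ e := lt_max_of_lt_right he
    exact pow_ne_zero _ (Complex.ofReal_ne_zero.2 this.ne')
  · have h0 : (‖z - l‖ : ℂ) ≠ 0 := Complex.ofReal_ne_zero.2 (he.trans_le hz).ne'
    simp only [max_eq_left hz]
    rw [div_mul_eq_mul_div, Complex.star_def, Complex.conj_mul']
    exact div_self (pow_ne_zero _ h0)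

section

variable {H : Type*} [NormedAddCommGroup H] [InnerProductSpace ℂ H] [CompleteSpace H]

/-- The spectral subspace of `N` for the set `F`, as the common kernel of all `h(N)` with `h`
continuous and vanishing on `F`. -/
noncomputable def specSubspace (N : H →L[ℂ] H) (F : Set ℂ) : Submodule ℂ H :=
  ⨅ h : {h : ℂ → ℂ // Continuous h ∧ ∀ z ∈ F, h z = 0}, (cfc h.1 N).ker

lemma mem_specSubspace {N : H →L[ℂ] H} {F : Set ℂ} {x : H} :
    x ∈ specSubspace N F ↔
      ∀ h : ℂ → ℂ, Continuous h → (∀ z ∈ F, h z = 0) → cfc h N x = 0 := by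
  simp [specSubspace, Submodule.mem_iInf]

lemma isClosed_specSubspace (N : H →L[ℂ] H) (F : Set ℂ) :
    IsClosed (specSubspace N F : Set H) := by
  simp only [specSubspace, Submodule.coe_iInf]
  exact isClosed_iInter fun h => (cfc h.1 N).isClosed_ker

lemma specSubspace_invariant {N B : H →L[ℂ] H} {F : Set ℂ} (h1 : Commute N B)
    (h2 : Commute (star N) B) {x : H} (hx : x ∈ specSubspace N F) : B x ∈ specSubspace N F := by
  rw [mem_specSubspace] at hx ⊢
  intro h hh h0
  have := congrArg (fun S : H →L[ℂ] H => S x) (Commute.cfc h1 h2 h).eq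
  simp only [mul_apply_eq_comp] at this
  rw [this, hx h hh h0, map_zero]

lemma specSubspace_bijOn {N : H →L[ℂ] H} (hN : IsStarNormal N) {F : Set ℂ} (hF : IsClosed F)
    {l : ℂ} (hl : l ∉ F) :
    Set.BijOn (fun x => N x - l • x) (specSubspace N F) (specSubspace N F) := by
  obtain ⟨e, he, hball⟩ := Metric.isOpen_iff.1 hF.isOpen_compl l hl
  obtain ⟨b, hb, hb1⟩ := exists_continuous_inv_sub l he
  have hbF : ∀ z ∈ F, b z * (z - l) = 1 := fun z hz => by
    refine hb1 z ?_
    by_contra hlt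
    exact hball (by simpa [dist_eq_norm] using hlt : z ∈ Metric.ball l e) hz
  have hc : Commute (cfc b N) N := Commute.cfc (Commute.refl N) hN.star_comm_self b
  have hc' : Commute (star N) (cfc b N) :=
    (Commute.cfc (hN.star_comm_self).symm (Commute.refl _) b).symm
  -- On the subspace, `b(N)` is the inverse of `N - l`.
  have hinv : ∀ x ∈ specSubspace N F, cfc b N (N x - l • x) = x := by
    intro x hx
    have h1 := (mem_specSubspace.1 hx) (fun z => b z * (z - l) - 1) (by fun_prop)
      (fun z hz => by rw [hbF z hz, sub_self])
    have h2 : cfc (fun z => b z * (z - l) - 1) N =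
        cfc b N * (N - algebraMap ℂ _ l) - 1 := by
      rw [cfc_sub _ _ N, cfc_mul _ _ N, cfc_sub _ _ N, cfc_id' ℂ N, cfc_const l N, cfc_const_one ℂ N]
    rw [h2] at h1
    simpa [Algebra.algebraMap_eq_smul_one, sub_eq_zero] using h1
  refine ⟨fun x hx => ?_, fun x hx y hy hxy => ?_, fun y hy => ?_⟩
  · exact sub_mem (specSubspace_invariant (Commute.refl N) hN.star_comm_self hx)
      (Submodule.smul_mem _ _ hx)
  · rw [← hinv x hx, ← hinv y hy]
    exact congrArg _ hxy
  · refine ⟨cfc b N y, specSubspace_invariant hc.symm hc' hy, ?_⟩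
    have h3 := congrArg (fun S : H →L[ℂ] H => S y) hc.eq
    simp only [mul_apply_eq_comp] at h3
    have := hinv y hy
    rw [map_sub, map_smul, h3] at this
    exact this

/-- A shrinking of an open cover of the plane with a subordinate partition of unity. -/
lemma exists_shrink {U V : Set ℂ} (hU : IsOpen U) (hV : IsOpen V) (hUV : U ∪ V = Set.univ) :
    ∃ (F G : Set ℂ) (p : ℂ → ℂ), IsClosed F ∧ IsClosed G ∧ F ⊆ U ∧ G ⊆ V ∧ Continuous p ∧
      (∀ z, z ∉ F → p z = 0) ∧ (∀ z, z ∉ G → p z = 1) := by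
  have hdis : Disjoint Uᶜ Vᶜ := by
    rw [Set.disjoint_compl_left_iff_subset]
    intro z hz
    have : z ∈ U ∪ V := hUV ▸ Set.mem_univ z
    exact this.resolve_right hz
  obtain ⟨f, hf0, hf1, -⟩ :=
    exists_continuous_zero_one_of_isClosed hU.isClosed_compl hV.isClosed_compl hdis
  refine ⟨{z | 1 / 3 ≤ f z}, {z | f z ≤ 2 / 3}, fun z => ((max 0 (min 1 (3 * f z - 1)) : ℝ) : ℂ),
    isClosed_le continuous_const f.continuous, isClosed_le f.continuous continuous_const,
    ?_, ?_, by fun_prop, ?_, ?_⟩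
  · intro z hz
    by_contra hzU
    have h0 : f z = 0 := hf0 hzU
    simp only [Set.mem_ofPred_eq, h0] at hz
    norm_num at hz
  · intro z hz
    by_contra hzV
    have h1 : f z = 1 := hf1 hzV
    simp only [Set.mem_ofPred_eq, h1] at hz
    norm_num at hz
  · intro z hz
    simp only [Set.mem_ofPred_eq, not_le] at hz
    have : max 0 (min 1 (3 * f z - 1)) = 0 := max_eq_left ((min_le_right _ _).trans (by linarith))
    simp only [this, Complex.ofReal_zero]
  · intro z hz
    simp only [Set.mem_ofPred_eq, not_le] at hz
    have : max 0 (min 1 (3 * f z - 1)) = 1 := by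
      rw [min_eq_left (by linarith)]; norm_num
    simp only [this, Complex.ofReal_one]

lemma specSubspace_sup {N : H →L[ℂ] H} (hN : IsStarNormal N) {F G : Set ℂ} {p : ℂ → ℂ}
    (hp : Continuous p) (h0 : ∀ z, z ∉ F → p z = 0) (h1 : ∀ z, z ∉ G → p z = 1) :
    specSubspace N F ⊔ specSubspace N G = ⊤ := by
  have key : ∀ (E : Set ℂ) (p : ℂ → ℂ), Continuous p → (∀ z, z ∉ E → p z = 0) →
      ∀ x, cfc p N x ∈ specSubspace N E := by
    intro E p hp h0 x
    rw [mem_specSubspace]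
    intro h hh hz
    rw [← mul_apply_eq_comp, ← cfc_mul h p N hh.continuousOn hp.continuousOn]
    have : (fun z => h z * p z) = fun _ => 0 := by
      ext z
      by_cases hzE : z ∈ E
      · simp [hz z hzE]
      · simp [h0 z hzE]
    rw [this, cfc_const_zero]
    simp
  rw [Submodule.eq_top_iff']
  intro x
  refine Submodule.mem_sup.2 ⟨_, key F p hp h0 x, _, key G (fun z => 1 - p z) (by fun_prop)
    (fun z hz => by rw [h1 z hz, sub_self]) x, ?_⟩
  rw [cfc_sub _ _ N, cfc_const_one ℂ N]
  simp

/-! ### Invertible `n`-normal operators -/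

/-- Decomposability of an invertible `n`-normal operator. The subspaces are moreover invariant under
every operator commuting with `A` and `A*`. -/
lemma decomposable_of_isUnit {A : H →L[ℂ] H} {n : ℕ} (hn : 1 ≤ n)
    (hA : Commute (star A) (A ^ n)) (hu : IsUnit A) {U V : Set ℂ} (hU : IsOpen U) (hV : IsOpen V)
    (hUV : U ∪ V = Set.univ) :
    ∃ M N : Submodule ℂ H, IsClosed (M : Set H) ∧ IsClosed (N : Set H) ∧ M ⊔ N = ⊤ ∧
      (∀ x ∈ M, A x ∈ M) ∧ (∀ x ∈ N, A x ∈ N) ∧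
      (∀ B, Commute B A → Commute B (star A) → (∀ x ∈ M, B x ∈ M) ∧ (∀ x ∈ N, B x ∈ N)) ∧
      (∀ l ∉ U, Set.BijOn (fun x => A x - l • x) M M) ∧
      (∀ l ∉ V, Set.BijOn (fun x => A x - l • x) N N) := by
  obtain ⟨s, N, hs, hsa, hN, hsN, hcomm⟩ := exists_similar_normal hn hA hu
  obtain ⟨F, G, p, hF, hG, hFU, hGV, hp, h0, h1⟩ := exists_shrink hU hV hUV
  have hbij : Function.Bijective s := ContinuousLinearMap.isUnit_iff_bijective.1 hs
  have hap : ∀ x, s (A x) = N (s x) := fun x => congrArg (fun S : H →L[ℂ] H => S x) hsN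
  -- The pullback of a spectral subspace of `N` along `s`.
  let M : Set ℂ → Submodule ℂ H := fun E => (specSubspace N E).comap (s : H →ₗ[ℂ] H)
  have hmem : ∀ E x, x ∈ M E ↔ s x ∈ specSubspace N E := fun E x => Iff.rfl
  have hcl : ∀ E, IsClosed (M E : Set H) := fun E =>
    (isClosed_specSubspace N E).preimage s.continuous
  have hinvA : ∀ E, ∀ x ∈ M E, A x ∈ M E := fun E x hx => by
    rw [hmem, hap]
    exact specSubspace_invariant (Commute.refl N) hN.star_comm_self hx
  have hinvB : ∀ E B, Commute B A → Commute B (star A) → ∀ x ∈ M E, B x ∈ M E := by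
    intro E B hB hB' x hx
    have hBs := hcomm B hB hB'
    have hBs' : Commute (star B) s := by
      have := hBs.star_star; rwa [hsa.star_eq] at this
    have key : ∀ C, Commute C A → Commute C s → Commute N C := by
      intro C hC hCs
      refine (hs.mul_right_cancel ?_ : N * C = C * N)
      rw [mul_assoc, hCs.eq, ← mul_assoc, ← hsN, mul_assoc, ← hC.eq, ← mul_assoc, ← hCs.eq,
        mul_assoc, hsN, mul_assoc]
    have h2 : Commute N (star B) := by
      refine key _ ?_ hBs'
      have := hB'.star_star; rwa [star_star] at this
    have h2' : Commute (star N) B := by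
      have := h2.star_star; rwa [star_star] at this
    rw [hmem]
    have h3 : s (B x) = B (s x) := congrArg (fun S : H →L[ℂ] H => S x) hBs.eq.symm
    rw [h3]
    exact specSubspace_invariant (key B hB hBs) h2' hx
  have hbijM : ∀ E, IsClosed E → ∀ l ∉ E, Set.BijOn (fun x => A x - l • x) (M E) (M E) := by
    intro E hE l hl
    have hb := specSubspace_bijOn hN hE hl
    have hs' : ∀ x, s (A x - l • x) = N (s x) - l • s x := fun x => by
      rw [map_sub, map_smul, hap]
    refine ⟨fun x hx => sub_mem (hinvA E x hx) (Submodule.smul_mem _ _ hx),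
      fun x hx y hy hxy => ?_, fun y hy => ?_⟩
    · refine hbij.1 (hb.injOn hx hy ?_)
      exact (hs' x).symm.trans ((congrArg s hxy).trans (hs' y))
    · obtain ⟨z, hz, hzy⟩ := hb.surjOn hy
      obtain ⟨x, rfl⟩ := hbij.2 z
      exact ⟨x, hz, hbij.1 ((hs' x).trans hzy)⟩
  refine ⟨M F, M G, hcl F, hcl G, ?_, hinvA F, hinvA G,
    fun B hB hB' => ⟨hinvB F B hB hB', hinvB G B hB hB'⟩,
    fun l hl => hbijM F hF l fun h => hl (hFU h), fun l hl => hbijM G hG l fun h => hl (hGV h)⟩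
  rw [Submodule.eq_top_iff']
  intro x
  have hx : s x ∈ specSubspace N F ⊔ specSubspace N G := by
    rw [specSubspace_sup hN hp h0 h1]; trivial
  obtain ⟨y, hy, z, hz, hyz⟩ := Submodule.mem_sup.1 hx
  obtain ⟨y, rfl⟩ := hbij.2 y
  obtain ⟨z, rfl⟩ := hbij.2 z
  exact Submodule.mem_sup.2 ⟨y, hy, z, hz, hbij.1 (by rw [map_add, hyz])⟩

/-! ### Splitting off a neighbourhood of the origin -/

/-- The orthogonal projection onto the kernel of `G` commutes with every `B` such that `B` and `B*`
commute with `G`, the kernel being then a reducing subspace for `B`. -/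
lemma commute_starProjection_ker {G B : H →L[ℂ] H} (h1 : Commute B G) (h2 : Commute (star B) G) :
    Commute G.ker.starProjection B := by
  set E : H →L[ℂ] H := G.ker.starProjection with hE
  have hEs : star E = E := (isSelfAdjoint_starProjection G.ker).star_eq
  have key : ∀ C : H →L[ℂ] H, Commute C G → E * C * E = C * E := by
    intro C hC
    ext x
    refine Submodule.starProjection_eq_self_iff.2 ?_
    have hx : G (E x) = 0 := Submodule.starProjection_apply_mem G.ker x
    have h := congrArg (fun S : H →L[ℂ] H => S (E x)) hC.eq
    simp only [mul_apply_eq_comp, hx, map_zero] at h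
    exact h.symm
  have h3 := congrArg star (key _ h2)
  simp only [star_mul, star_star, hEs] at h3
  exact h3.symm.trans ((mul_assoc _ _ _).symm.trans (key B h1))

/-- Continuous functions for cutting at radius `d`: `g` vanishes exactly on the disc of radius `d`, `h`
is the radial retraction onto that disc, so that `w - h w` is a continuous multiple `c w` of `g w`,
and `v w` is the inverse of `w` off the disc. -/
lemma exists_cut_functions {d : ℝ} (hd : 0 < d) :
    ∃ g c h v : ℂ → ℂ, Continuous g ∧ Continuous c ∧ Continuous h ∧ Continuous v ∧
      (∀ w, g w * (1 - v w * w) = 0) ∧ (∀ w, w - h w = c w * g w) ∧ ∀ w, ‖h w‖ ≤ d := by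
  have hm : Continuous fun w : ℂ => ((max ‖w‖ d : ℝ) : ℂ) := by fun_prop
  have hmpos : ∀ w : ℂ, 0 < max ‖w‖ d := fun w => lt_max_of_lt_right hd
  have hm0 : ∀ w : ℂ, ((max ‖w‖ d : ℝ) : ℂ) ≠ 0 := fun w =>
    Complex.ofReal_ne_zero.2 (hmpos w).ne'
  have hcc : Continuous fun w : ℂ => w / ((max ‖w‖ d : ℝ) : ℂ) := continuous_id.div hm hm0
  refine ⟨fun w => ((max ‖w‖ d : ℝ) : ℂ) - d, fun w => w / ((max ‖w‖ d : ℝ) : ℂ),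
    fun w => d * (w / ((max ‖w‖ d : ℝ) : ℂ)), fun w => star w / ((max ‖w‖ d : ℝ) : ℂ) ^ 2,
    by fun_prop, hcc, by fun_prop, ?_, fun w => ?_, fun w => ?_, fun w => ?_⟩
  · exact Continuous.div (by fun_prop) (by fun_prop) fun w => pow_ne_zero _ (hm0 w)
  · rcases le_total ‖w‖ d with hw | hw
    · simp [max_eq_right hw]
    · have h0 : (‖w‖ : ℂ) ≠ 0 := Complex.ofReal_ne_zero.2 (hd.trans_le hw).ne'
      have : star w / ((‖w‖ : ℝ) : ℂ) ^ 2 * w = 1 := by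
        rw [div_mul_eq_mul_div, Complex.star_def, Complex.conj_mul']
        exact div_self (pow_ne_zero _ h0)
      simp only [max_eq_left hw, this, sub_self, mul_zero]
  · have := hm0 w
    field_simp
  · simp only [norm_mul, norm_div, Complex.norm_real, Real.norm_eq_abs]
    rw [abs_of_pos hd, abs_of_pos (hmpos w)]
    exact mul_le_of_le_one_right hd.le ((div_le_one (hmpos w)).2 (le_max_left _ _))

/-- If the `n`-th power of `A` agrees on the range of the idempotent `E` with an element `J` of norm less
than `|l| ^ n`, then `A - l` is invertible there, because `A ^ n - l ^ n` is and `A - l` divides it. -/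
lemma exists_inverse_on_range {R : Type*} [NormedRing R] [NormedAlgebra ℂ R]
    [CompleteSpace R] {A E J : R} {n : ℕ} {l : ℂ} {d : ℝ} (hEE : E * E = E)
    (hEA : Commute E A) (hAJ : Commute A J) (hEJ : Commute E J) (hTE : A ^ n * E = J * E)
    (hJ : ‖J‖ ≤ d) (hl : d < ‖l‖ ^ n) :
    ∃ B, E * B = B ∧ (A - algebraMap ℂ _ l) * B = E ∧ B * (A - algebraMap ℂ _ l) = E := by
  have hd : 0 ≤ d := (norm_nonneg J).trans hJ
  set T := A ^ n with hT
  set L : R := algebraMap ℂ _ l with hL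
  have hLc : ∀ X : R, Commute L X := fun X => Algebra.commutes l X
  have hl0 : l ^ n ≠ 0 := by
    rw [← norm_pos_iff, norm_pow]; exact hd.trans_lt hl
  have hW : IsUnit (J - L ^ n) := by
    have h1 : IsUnit (1 - (l ^ n)⁻¹ • J) := by
      apply isUnit_one_sub_of_norm_lt_one
      rw [norm_smul, norm_inv, norm_pow, inv_mul_lt_iff₀ (hd.trans_lt hl), mul_one]
      exact hJ.trans_lt hl
    have h2 : J - L ^ n = -(L ^ n * (1 - (l ^ n)⁻¹ • J)) := by
      rw [hL, ← map_pow, ← Algebra.smul_def, smul_sub, smul_inv_smul₀ hl0,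
        Algebra.algebraMap_eq_smul_one, neg_sub]
    rw [h2]
    refine IsUnit.neg (IsUnit.mul ?_ h1)
    rw [hL, ← map_pow]
    exact (IsUnit.mk0 _ hl0).map (algebraMap ℂ (R))
  obtain ⟨u, hu⟩ := hW
  set Q := ∑ i ∈ Finset.range n, A ^ i * L ^ (n - 1 - i) with hQ
  have hALQ : (A - L) * Q = T - L ^ n := (hLc A).symm.mul_geom_sum₂ n
  have hQcomm : ∀ X : R, Commute X A → Commute X Q := fun X hX =>
    Commute.sum_right _ _ _ fun i _ => (hX.pow_right i).mul_right ((hLc X).symm.pow_right _)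
  have hucomm : ∀ X : R, Commute X J → Commute X (↑u⁻¹ : R) := by
    intro X hX
    refine Commute.units_inv_right ?_
    rw [hu]
    exact hX.sub_right ((hLc X).symm.pow_right n)
  have hAu := hucomm A hAJ
  have hTu := hucomm T (hAJ.pow_left n)
  have hEu := hucomm E hEJ
  have hWE : (T - L ^ n) * E = u * E := by
    rw [hu, sub_mul, sub_mul, hTE]
  have hALcomm : Commute (A - L) (Q * ↑u⁻¹ * E) := by
    have h1 : Commute A (Q * ↑u⁻¹ * E) :=
      ((hQcomm A (Commute.refl A)).mul_right hAu).mul_right hEA.symm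
    exact h1.sub_left (hLc _)
  have hB : (A - L) * (Q * ↑u⁻¹ * E) = E := by
    have h1 : Commute (T - L ^ n) (↑u⁻¹ : R) :=
      Commute.sub_left hTu (Commute.pow_left (hLc (↑u⁻¹ : R)) n)
    rw [mul_assoc Q, ← mul_assoc, hALQ, ← mul_assoc, h1.eq, mul_assoc, hWE,
      Units.inv_mul_cancel_left]
  refine ⟨Q * ↑u⁻¹ * E, ?_, hB, ?_⟩
  · have h1 : Commute E (Q * ↑u⁻¹ * E) :=
      ((hQcomm E hEA).mul_right hEu).mul_right (Commute.refl E)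
    rw [h1.eq, mul_assoc, hEE]
  · rw [← hALcomm.eq, hB]

/-- For an `n`-normal `A` and `d > 0`, an orthogonal projection `E` reducing `A` (the spectral
projection of `A ^ n` for the disc of radius `d`) such that `A ^ n` has an inverse `v` on the range
of `1 - E`, and `A - l` has an inverse `B` on the range of `E` whenever `d < |l| ^ n`. -/
lemma exists_reducing_projection {A : H →L[ℂ] H} {n : ℕ}
    (hA : Commute (star A) (A ^ n)) {d : ℝ} (hd : 0 < d) :
    ∃ E : H →L[ℂ] H, E * E = E ∧ star E = E ∧ Commute E A ∧ Commute E (star A) ∧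
      (∃ v, Commute E v ∧ A ^ n * v * (1 - E) = 1 - E ∧ v * A ^ n * (1 - E) = 1 - E) ∧
      ∀ l : ℂ, d < ‖l‖ ^ n → ∃ B, E * B = B ∧ (A - algebraMap ℂ _ l) * B = E ∧
        B * (A - algebraMap ℂ _ l) = E := by
  set T := A ^ n with hT
  have hTn : IsStarNormal T := isStarNormal_pow hA
  have hAT : Commute T A := (Commute.refl A).pow_left n
  have hAT' : Commute (star T) A := by
    have := hA.star_star
    rw [star_star] at this
    exact this.symm
  obtain ⟨g, c, h, v, hgc, hcc, hhc, hvc, hgv, hch, hhd⟩ := exists_cut_functions hd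
  set G := cfc g T with hG
  set E : H →L[ℂ] H := G.ker.starProjection with hE
  have hEE : E * E = E := G.ker.isIdempotentElem_starProjection
  have hEs : star E = E := (isSelfAdjoint_starProjection G.ker).star_eq
  have hGA : Commute G A := Commute.cfc hAT hAT' g
  have hGA' : Commute G (star A) := Commute.cfc hA.symm (by
    have := hAT.star_star; exact this) g
  have hEA : Commute E A := commute_starProjection_ker hGA.symm hGA'.symm
  have hEA' : Commute E (star A) := by
    have := hEA.star_star; rwa [hEs] at this
  have hET : Commute E T := hEA.pow_right n
  have hET' : Commute (star T) E := by
    have := hET.star_star; rw [hEs] at this; exact this.symm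
  have hEf : ∀ f : ℂ → ℂ, Commute E (cfc f T) := fun f => (Commute.cfc hET.symm hET' f).symm
  have hGE : G * E = 0 := by
    ext x
    exact Submodule.starProjection_apply_mem G.ker x
  have hEX : ∀ X : H →L[ℂ] H, G * X = 0 → E * X = X := by
    intro X hX
    ext x
    exact Submodule.starProjection_eq_self_iff.2 (congrArg (fun S : H →L[ℂ] H => S x) hX)
  have hvT : Commute (cfc v T) T := Commute.cfc (Commute.refl T) hTn.star_comm_self v
  refine ⟨E, hEE, hEs, hEA, hEA', ⟨cfc v T, hEf v, ?_⟩, ?_⟩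
  · have h1 : G * (1 - cfc v T * T) = 0 := by
      have h2 : G * (1 - cfc v T * T) = cfc (fun w => g w * (1 - v w * w)) T := by
        rw [cfc_mul g _ T, cfc_sub _ _ T, cfc_mul v _ T, cfc_id' ℂ T, cfc_const_one ℂ T]
      have h3 : (fun w => g w * (1 - v w * w)) = fun _ => 0 := funext hgv
      rw [h2, h3, cfc_const_zero]
    have h4 := hEX _ h1
    have h5 : Commute E (cfc v T * T) := (hEf v).mul_right hET
    have h6 : cfc v T * T * (1 - E) = 1 - E := by
      rw [mul_sub, mul_one, ← h5.eq]
      rw [mul_sub, mul_one] at h4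
      rw [sub_eq_sub_iff_add_eq_add] at h4 ⊢
      rw [← h4, add_comm]
    exact ⟨by rw [← hvT.eq]; exact h6, h6⟩
  · intro l hl
    have hTE : T * E = cfc h T * E := by
      have h1 : T - cfc h T = cfc c T * G := by
        rw [← cfc_mul c g T, ← funext hch, cfc_sub _ _ T, cfc_id' ℂ T]
      have h2 : (T - cfc h T) * E = 0 := by rw [h1, mul_assoc, hGE, mul_zero]
      rwa [sub_mul, sub_eq_zero] at h2
    exact exists_inverse_on_range hEE hEA (Commute.cfc hAT hAT' h).symm (hEf h) hTE
      (norm_cfc_le hd.le fun w _ => hhd w) hl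

/-- It suffices to show that `A - l` maps `M` bijectively onto itself: the inverse on the closed
subspace `M` is bounded by the open mapping theorem. -/
lemma spectrum_clmRestrict_subset {A : H →L[ℂ] H} {M : Submodule ℂ H} (hM : ∀ x ∈ M, A x ∈ M)
    (hcl : IsClosed (M : Set H)) {U : Set ℂ}
    (hb : ∀ l ∉ U, Set.BijOn (fun x => A x - l • x) M M) :
    spectrum ℂ (clmRestrict A M hM) ⊆ U := by
  intro l hl
  by_contra hlU
  refine hl ?_
  have hcM : CompleteSpace M := hcl.completeSpace_coe
  have hb := hb l hlU
  rw [resolventSet, Set.mem_ofPred_eq, ← IsUnit.neg_iff, neg_sub,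
    ContinuousLinearMap.isUnit_iff_bijective]
  have hval : ∀ x : M, (((clmRestrict A M hM - algebraMap ℂ _ l) x : M) : H) = A x - l • (x : H) := by
    intro x
    rw [Algebra.algebraMap_eq_smul_one]
    rfl
  refine ⟨fun x y hxy => Subtype.ext (hb.injOn x.2 y.2 ?_), fun y => ?_⟩
  · exact (hval x).symm.trans ((congrArg Subtype.val hxy).trans (hval y))
  · obtain ⟨x, hx, hxy⟩ := hb.surjOn y.2
    exact ⟨⟨x, hx⟩, Subtype.ext ((hval _).trans hxy)⟩

/-! ### Gluing the two parts -/

/-- The splitting at the origin: when `0 ∈ U`, the part of `A` on which `|A ^ n|` is small is put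
into `M`, and the remaining part, completed by the identity, is an invertible `n`-normal operator. -/
lemma decomposable_of_zero_mem {A : H →L[ℂ] H} {n : ℕ} (hn : 1 ≤ n)
    (hA : Commute (star A) (A ^ n)) {U V : Set ℂ} (hU : IsOpen U) (hV : IsOpen V)
    (hUV : U ∪ V = Set.univ) (h0 : (0 : ℂ) ∈ U) :
    ∃ (M N : Submodule ℂ H) (hM : ∀ x ∈ M, A x ∈ M) (hN : ∀ x ∈ N, A x ∈ N),
      IsClosed (M : Set H) ∧ IsClosed (N : Set H) ∧ M ⊔ N = ⊤ ∧
      spectrum ℂ (clmRestrict A M hM) ⊆ U ∧ spectrum ℂ (clmRestrict A N hN) ⊆ V := by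
  have hn0 : n ≠ 0 := by omega
  obtain ⟨r, hr, hball⟩ := Metric.isOpen_iff.1 hU 0 h0
  have hdU : ∀ l ∉ U, (r / 2) ^ n < ‖l‖ ^ n := by
    intro l hl
    refine pow_lt_pow_left₀ ?_ (by positivity) hn0
    by_contra hlt
    exact hl (hball (by rw [mem_ball_zero_iff]; linarith))
  obtain ⟨E, hEE, hEs, hEA, hEA', ⟨v, hEv, hTv, hvT⟩, hB⟩ :=
    exists_reducing_projection hA (d := (r / 2) ^ n) (by positivity)
  set Q := 1 - E with hQ
  have hcQ : ∀ X, Commute E X → Commute Q X := fun X hX => (Commute.one_left X).sub_left hX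
  have hQE : Q * E = 0 := by rw [hQ, sub_mul, one_mul, hEE, sub_self]
  have hEQ : E * Q = 0 := by rw [hQ, mul_sub, mul_one, hEE, sub_self]
  have hQQ : Q * Q = Q := by
    conv_lhs => enter [2]; rw [hQ]
    rw [mul_sub, mul_one, hQE, sub_zero]
  have hQE1 : Q + E = 1 := sub_add_cancel _ _
  have hQs : star Q = Q := by rw [hQ, star_sub, star_one, hEs]
  have hmul : ∀ X Y : H →L[ℂ] H, Commute E Y →
      (X * Q + E) * (Y * Q + E) = X * Y * Q + E := by
    intro X Y hY
    have h1 : X * Q * (Y * Q) = X * Y * Q := by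
      rw [mul_assoc X, ← mul_assoc Q, (hcQ Y hY).eq, mul_assoc Y, hQQ, mul_assoc]
    have h2 : X * Q * E = 0 := by rw [mul_assoc, hQE, mul_zero]
    have h3 : E * (Y * Q) = 0 := by rw [← mul_assoc, hY.eq, mul_assoc, hEQ, mul_zero]
    rw [add_mul, mul_add, mul_add, h1, h2, h3, hEE, add_zero, zero_add]
  set A' := A * Q + E with hA'
  have hpow : ∀ k, A' ^ k = A ^ k * Q + E := by
    intro k
    induction k with
    | zero => simp [hQE1]
    | succ k ih => rw [pow_succ, ih, hA', hmul _ _ hEA, ← pow_succ]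
  have hEA1 : Commute E A' := (hEA.mul_right (hcQ E (Commute.refl E)).symm).add_right (Commute.refl E)
  have hEA1' : Commute E (star A') := by
    have := hEA1.star_star; rwa [hEs] at this
  have hstar : star A' = star A * Q + E := by
    rw [hA', star_add, star_mul, hQs, hEs, (hcQ _ hEA').eq]
  have hA1 : Commute (star A') (A' ^ n) := by
    have hET := hEA1.pow_right n
    rw [hstar]
    refine Commute.add_left (Commute.mul_left ?_ (hcQ _ hET)) hET
    rw [hpow]
    exact (hA.mul_right (hcQ _ hEA').symm).add_right hEA'.symm
  have hu : IsUnit A' := by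
    rw [← isUnit_pow_iff hn0, hpow]
    refine ⟨⟨_, v * Q + E, ?_, ?_⟩, rfl⟩
    · rw [hmul _ _ hEv, hTv, hQE1]
    · rw [hmul _ _ (hEA.pow_right n), hvT, hQE1]
  obtain ⟨M, N, hMc, hNc, hMN, hMA, hNA, hred, hMb, hNb⟩ :=
    decomposable_of_isUnit hn hA1 hu hU hV hUV
  obtain ⟨hME, hNE⟩ := hred E hEA1 hEA1'
  have hap : ∀ {X Y : H →L[ℂ] H}, X = Y → ∀ x, X x = Y x := fun h x => by rw [h]
  have hQap : ∀ x, Q x = x - E x := fun x => rfl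
  have hMQ : ∀ x ∈ M, Q x ∈ M := fun x hx => sub_mem hx (hME x hx)
  have hNQ : ∀ x ∈ N, Q x ∈ N := fun x hx => sub_mem hx (hNE x hx)
  have hQA : ∀ x, Q (A x) = A (Q x) := hap (hcQ A hEA).eq
  have hEAx : ∀ x, E (A x) = A (E x) := hap hEA.eq
  have hQQx : ∀ x, Q (Q x) = Q x := hap hQQ
  have hEQx : ∀ x, E (Q x) = 0 := hap hEQ
  have hQEx : ∀ x, Q (E x) = 0 := hap hQE
  have hQA' : ∀ x, Q (A' x) = A (Q x) := fun x => by
    rw [hA']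
    simp only [add_apply, mul_apply_eq_comp, map_add, hQEx, add_zero, hQA, hQQx]
  have hA'Q : ∀ x, A' (Q x) = A (Q x) := fun x => by
    rw [hA']
    simp only [add_apply, mul_apply_eq_comp, hQQx, hEQx, add_zero]
  have hker : ∀ x, E x = 0 → Q x = x := fun x hx => by rw [hQap, hx, sub_zero]
  have hMA' : ∀ x ∈ M.comap (Q : H →ₗ[ℂ] H), A x ∈ M.comap (Q : H →ₗ[ℂ] H) := by
    intro x hx
    change Q (A x) ∈ M
    rw [hQA, ← hA'Q]
    exact hMA _ hx
  have hNA' : ∀ x ∈ N ⊓ E.ker, A x ∈ N ⊓ E.ker := by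
    rintro x ⟨hx, hx'⟩
    have hx' : E x = 0 := hx'
    refine ⟨?_, ?_⟩
    · rw [← hker x hx', ← hA'Q, hker x hx']
      exact hNA x hx
    · change E (A x) = 0
      rw [hEAx, hx', map_zero]
  have hMc' : IsClosed (M.comap (Q : H →ₗ[ℂ] H) : Set H) := hMc.preimage Q.continuous
  have hNc' : IsClosed ((N ⊓ E.ker : Submodule ℂ H) : Set H) := hNc.inter E.isClosed_ker
  refine ⟨M.comap (Q : H →ₗ[ℂ] H), N ⊓ E.ker, hMA', hNA', hMc', hNc', ?_,
    spectrum_clmRestrict_subset hMA' hMc' fun l hl => ?_,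
    spectrum_clmRestrict_subset hNA' hNc' fun l hl => ?_⟩
  · rw [Submodule.eq_top_iff']
    intro x
    have hx : Q x ∈ M ⊔ N := by rw [hMN]; trivial
    obtain ⟨a, ha, b, hb, hab⟩ := Submodule.mem_sup.1 hx
    refine Submodule.mem_sup.2 ⟨Q a + E x, ?_, Q b, ⟨hNQ b hb, hEQx b⟩, ?_⟩
    · change Q (Q a + E x) ∈ M
      rw [map_add, hQQx, hQEx, add_zero]
      exact hMQ a ha
    · rw [add_right_comm, ← map_add, hab, hQQx, hQap, sub_add_cancel]
  · obtain ⟨B, hEB, hAB, hBA⟩ := hB l (hdU l hl)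
    have hb := hMb l hl
    have hsub : ∀ x, (A - algebraMap ℂ (H →L[ℂ] H) l) x = A x - l • x := fun x => by
      rw [Algebra.algebraMap_eq_smul_one]; rfl
    have hABx : ∀ x, A (B x) - l • B x = E x := fun x => by
      rw [← hsub]; exact hap hAB x
    have hBAx : ∀ x, B (A x - l • x) = E x := fun x => by
      rw [← hsub]; exact hap hBA x
    have hQB : ∀ x, Q (B x) = 0 := fun x => by
      rw [← hap hEB x]; exact hQEx _
    have hQl : ∀ x, Q (A x - l • x) = A' (Q x) - l • Q x := fun x => by
      rw [map_sub, map_smul, hQA, hA'Q]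
    refine ⟨fun x hx => sub_mem (hMA' x hx) (Submodule.smul_mem _ _ hx),
      fun x hx y hy hxy => ?_, fun y hy => ?_⟩
    · have h1 : E x = E y := by
        rw [← hBAx x, ← hBAx y]; exact congrArg B hxy
      have h2 : Q x = Q y := by
        refine hb.injOn hx hy ?_
        exact (hQl x).symm.trans ((congrArg Q hxy).trans (hQl y))
      rw [hQap, hQap, h1] at h2
      exact sub_left_injective h2
    · obtain ⟨z, hz, hzy⟩ := hb.surjOn hy
      have hzy : A' z - l • z = Q y := hzy
      refine ⟨B y + Q z, ?_, ?_⟩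
      · change Q (B y + Q z) ∈ M
        rw [map_add, hQB, zero_add, hQQx]
        exact hMQ z hz
      · have h1 : A (Q z) - l • Q z = Q y := by
          rw [← hQA', ← map_smul, ← map_sub, hzy, hQQx]
        change A (B y + Q z) - l • (B y + Q z) = y
        rw [map_add, smul_add, add_sub_add_comm, hABx, h1, hQap, add_sub_cancel]
  · have hb := hNb l hl
    refine ⟨fun x hx => sub_mem (hNA' x hx) (Submodule.smul_mem _ _ hx),
      fun x hx y hy hxy => ?_, fun y hy => ?_⟩
    · refine hb.injOn hx.1 hy.1 ?_
      have h1 : ∀ x, E x = 0 → A' x = A x := fun x h => by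
        rw [← hker x h]; exact hA'Q x
      change A' x - l • x = A' y - l • y
      rw [h1 x hx.2, h1 y hy.2]
      exact hxy
    · obtain ⟨z, hz, hzy⟩ := hb.surjOn hy.1
      have hzy : A' z - l • z = y := hzy
      refine ⟨Q z, ⟨hNQ z hz, hEQx z⟩, ?_⟩
      change A (Q z) - l • Q z = y
      rw [← hQA', ← map_smul, ← map_sub, hzy, hker y hy.2]

end

/-- Corollary 3.3: An `n`-normal operator `A` is decomposable: for every
open cover `ℂ = U ∪ V` there are closed `A`-invariant subspaces `M`, `N` with `M + N = H`,
`σ(A|_M) ⊆ U` and `σ(A|_N) ⊆ V`. -/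
theorem nNormal_decomposable {H : Type*} [NormedAddCommGroup H] [InnerProductSpace ℂ H]
    [CompleteSpace H] (n : ℕ) (hn : 1 ≤ n) (A : H →L[ℂ] H)
    (hA : adjoint A * A ^ n = A ^ n * adjoint A) :
    ∀ U V : Set ℂ, IsOpen U → IsOpen V → U ∪ V = Set.univ →
      ∃ (M N : Submodule ℂ H) (hM : ∀ x ∈ M, A x ∈ M) (hN : ∀ x ∈ N, A x ∈ N),
        IsClosed (M : Set H) ∧ IsClosed (N : Set H) ∧ M ⊔ N = ⊤ ∧
        spectrum ℂ (clmRestrict A M hM) ⊆ U ∧ spectrum ℂ (clmRestrict A N hN) ⊆ V := by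
  intro U V hU hV hUV
  have h0 : (0 : ℂ) ∈ U ∪ V := hUV ▸ Set.mem_univ 0
  rcases h0 with h0 | h0
  · exact decomposable_of_zero_mem hn hA hU hV hUV h0
  · obtain ⟨M, N, hM, hN, h1, h2, h3, h4, h5⟩ :=
      decomposable_of_zero_mem hn hA hV hU (Set.union_comm U V ▸ hUV) h0
    exact ⟨N, M, hN, hM, h2, h1, sup_comm M N ▸ h3, h5, h4⟩
end

section
/- (Theorem 3.5, dominant case) Let H be a complex Hilbert space, let n ≥ 1 be an integer, and let A be a bounded linear operator on H such that A^n is normal. If A is dominant, i.e. for every λ ∈ ℂ there exists a real number M_λ > 0 such that ‖(A − λ)* x‖ ≤ M_λ ‖(A − λ)x‖ for all x ∈ H, then A is normal: A*A = AA*. -/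
/-!
Put `D = A* A - A A*`; this is self-adjoint, and the theorem says `D = 0`.

*Local estimate.* For every `μ : ℂ` and `ε > 0` there is `δ > 0` such that
`‖(A ^ n - μ) y‖ ≤ δ ‖y‖` implies `‖D y‖ ≤ ε ‖y‖` (`local_estimate`).

* If `μ ≠ 0`, then `X ^ n - μ` has distinct roots `z`, and Lagrange interpolation writes `y` as a
  sum of vectors `yz = L_z(A) y` with `(A - z) yz` a multiple of `(A ^ n - μ) y`. Dominance bounds
  `(A - z)* yz` by `(A - z) yz`, and `D` is also the self-commutator of `A - z`, so
  `‖D y‖ ≤ C ‖(A ^ n - μ) y‖` (`norm_selfComm_le_of_nodal`).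
* If `μ = 0`, dominance at `0` gives `‖A x‖ ^ 2 ≤ M ‖A (A x)‖ ‖x‖`, so `‖A y‖` is small relative
  to `‖y‖` as soon as `‖A ^ n y‖` is (`norm_apply_small`), and `‖D y‖ ≤ C ‖A y‖`.

*Globalization.* By Fuglede's theorem the normal operator `A ^ n` commutes with `A*`, hence with
`D`, so `A ^ n` and `D` generate a commutative C⋆-algebra. Each of its characters `χ` is realized by
joint approximate eigenvectors of `A ^ n` and `D` (`exists_joint_approx_eigenvector`). By the local
estimate at `μ = χ (A ^ n)` this forces `χ D = 0`; as this holds for all `χ`, `D = 0`.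
-/

open ContinuousLinearMap Filter Topology

section helpers

variable {H : Type*} [NormedAddCommGroup H] [InnerProductSpace ℂ H] [CompleteSpace H]

/-- For commuting normal operators `N`, `D` with `D ≠ 0` there is a pair `(μ, d)` with `d ≠ 0` in
their joint approximate point spectrum. It is the pair of values at `N`, `D` of a character of the
commutative C⋆-algebra they generate that does not vanish at `D`. -/
lemma exists_joint_approx_eigenvector {N D : H →L[ℂ] H} (hN : IsStarNormal N)
    (hD : IsStarNormal D) (hND : Commute N D) (hD0 : D ≠ 0) :
    ∃ μ d : ℂ, d ≠ 0 ∧ ∀ c : ℝ, 0 < c →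
      ∃ y : H, ‖(N - μ • 1) y‖ ^ 2 + ‖(D - d • 1) y‖ ^ 2 < c * ‖y‖ ^ 2 := by
  let S : StarSubalgebra ℂ (H →L[ℂ] H) := (StarAlgebra.adjoin ℂ {N, D}).topologicalClosure
  have hS : IsClosed (S : Set (H →L[ℂ] H)) := StarSubalgebra.isClosed_topologicalClosure _
  have hc₁ := hN.commute_star_left hND
  have hc₂ := hD.commute_star_right hND
  have hcomm : IsMulCommutative (StarAlgebra.adjoin ℂ {N, D}) :=
    StarAlgebra.isMulCommutative_adjoin ℂ (by grind) (by grind [commute_star_comm])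
  let _ : CommRing S := StarSubalgebra.commRingTopologicalClosure _
    (fun x y => hcomm.is_comm.comm x y)
  let _ : CommCStarAlgebra S := { }
  have hNS : N ∈ S :=
    StarSubalgebra.le_topologicalClosure _ (StarAlgebra.subset_adjoin ℂ _ (by simp))
  have hDS : D ∈ S :=
    StarSubalgebra.le_topologicalClosure _ (StarAlgebra.subset_adjoin ℂ _ (by simp))
  let N' : S := ⟨N, hNS⟩
  let D' : S := ⟨D, hDS⟩
  have hD' : WeakDual.gelfandTransform ℂ S D' ≠ 0 := by
    intro h
    have : D' = 0 := (gelfandTransform_isometry S).injective (by rw [h, map_zero])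
    exact hD0 (congrArg Subtype.val this)
  obtain ⟨χ, hχ⟩ : ∃ χ, WeakDual.gelfandTransform ℂ S D' χ ≠ 0 := by
    by_contra! h
    exact hD' (ContinuousMap.ext h)
  refine ⟨χ N', χ D', hχ, fun c hc => ?_⟩
  by_contra! h
  let e : S := star (N' - χ N' • 1) * (N' - χ N' • 1) + star (D' - χ D' • 1) * (D' - χ D' • 1)
  have he : χ e = 0 := by
    simp [e]
  have hu : IsUnit (e : H →L[ℂ] H) := by
    refine isUnit_of_forall_le_norm_inner_map _ (c := ⟨c, hc.le⟩) hc fun x => ?_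
    have : inner ℂ ((e : H →L[ℂ] H) x) x
        = ((‖(N - χ N' • 1) x‖ ^ 2 + ‖(D - χ D' • 1) x‖ ^ 2 : ℝ) : ℂ) := by
      have h1 : (e : H →L[ℂ] H) = adjoint (N - χ N' • 1) * (N - χ N' • 1)
          + adjoint (D - χ D' • 1) * (D - χ D' • 1) := rfl
      rw [h1, add_apply, inner_add_left, mul_apply_eq_comp, mul_apply_eq_comp, adjoint_inner_left,
        adjoint_inner_left, inner_self_eq_norm_sq_to_K, inner_self_eq_norm_sq_to_K]
      push_cast
      rfl
    rw [this, Complex.norm_real, Real.norm_of_nonneg (by positivity), mul_comm]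
    exact h x
  have hu' : IsUnit e := (S.coe_isUnit).1 hu
  exact (hu'.map χ).ne_zero he

/-- The self-commutator is unchanged by scalar translations of `A`, so dominance controls it at
every `z`. -/
lemma norm_selfComm_le {A : H →L[ℂ] H} {z : ℂ} {M : ℝ}
    (hM : ∀ x : H, ‖adjoint (A - z • 1) x‖ ≤ M * ‖(A - z • 1) x‖) (x : H) :
    ‖(adjoint A * A - A * adjoint A) x‖ ≤ ‖A - z • 1‖ * (1 + M) * ‖(A - z • 1) x‖ := by
  have h : adjoint A * A - A * adjoint A
      = adjoint (A - z • 1) * (A - z • 1) - (A - z • 1) * adjoint (A - z • 1) := by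
    simp only [← star_eq_adjoint, star_sub, star_smul, star_one, mul_sub, sub_mul, smul_mul_assoc,
      mul_smul_comm, one_mul, mul_one, smul_sub, smul_smul, mul_comm (star z) z]
    abel
  rw [h, sub_apply, mul_apply_eq_comp, mul_apply_eq_comp]
  calc _ ≤ ‖adjoint (A - z • 1) ((A - z • 1) x)‖ + ‖(A - z • 1) (adjoint (A - z • 1) x)‖ :=
        norm_sub_le _ _
    _ ≤ ‖A - z • 1‖ * ‖(A - z • 1) x‖ + ‖A - z • 1‖ * (M * ‖(A - z • 1) x‖) := by
        gcongr
        · refine (le_opNorm _ _).trans_eq ?_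
          rw [LinearIsometryEquiv.norm_map]
        · exact (le_opNorm _ _).trans (by gcongr; exact hM x)
    _ = _ := by ring

/-- The self-commutator is controlled by `p(A)` for each split polynomial `p` with simple roots. -/
lemma norm_selfComm_le_of_nodal {A : H →L[ℂ] H}
    (hdom : ∀ z : ℂ, ∃ M : ℝ, 0 < M ∧
      ∀ x : H, ‖adjoint (A - z • 1) x‖ ≤ M * ‖(A - z • 1) x‖)
    {s : Finset ℂ} (hs : s.Nonempty) :
    ∃ C : ℝ, 0 < C ∧ ∀ y : H, ‖(adjoint A * A - A * adjoint A) y‖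
      ≤ C * ‖Polynomial.aeval A (Lagrange.nodal s id) y‖ := by
  choose M hM0 hM using hdom
  refine ⟨1 + ∑ z ∈ s, ‖A - z • 1‖ * (1 + M z) * ‖Lagrange.nodalWeight s id z‖, ?_, fun y => ?_⟩
  · have : 0 ≤ ∑ z ∈ s, ‖A - z • 1‖ * (1 + M z) * ‖Lagrange.nodalWeight s id z‖ :=
      Finset.sum_nonneg fun z _ => by have := hM0 z; positivity
    linarith
  have hy : y = ∑ z ∈ s, Polynomial.aeval A (Lagrange.basis s id z) y := by
    rw [← sum_apply, ← map_sum,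
      Lagrange.sum_basis Function.injective_id.injOn hs, map_one]
    rfl
  have hz : ∀ z ∈ s, (A - z • 1) (Polynomial.aeval A (Lagrange.basis s id z) y)
      = Lagrange.nodalWeight s id z • Polynomial.aeval A (Lagrange.nodal s id) y := by
    intro z hz
    have h1 : (Polynomial.X - Polynomial.C z) * Lagrange.basis s id z
        = Polynomial.C (Lagrange.nodalWeight s id z) * Lagrange.nodal s id := by
      rw [Lagrange.basis_eq_prod_sub_inv_mul_nodal_div hz, ← Lagrange.nodal_erase_eq_nodal_div hz,
        Lagrange.nodal_eq_mul_nodal_erase hz, id]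
      ring
    have h2 := congrArg (fun p => Polynomial.aeval A p y) h1
    simpa [Algebra.algebraMap_eq_smul_one] using h2
  conv_lhs => rw [hy, map_sum]
  calc _ ≤ ∑ z ∈ s, ‖A - z • 1‖ * (1 + M z) * ‖Lagrange.nodalWeight s id z‖
          * ‖Polynomial.aeval A (Lagrange.nodal s id) y‖ := by
        refine norm_sum_le_of_le _ fun z hzs => ?_
        refine (norm_selfComm_le (hM z) _).trans_eq ?_
        rw [hz z hzs, norm_smul]
        ring
    _ ≤ _ := by
        rw [← Finset.sum_mul]
        gcongr
        linarith

/-- `X ^ n - μ` is the nodal polynomial of the set of `n`-th roots of `μ`. -/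
lemma exists_nodal_eq {n : ℕ} (hn : 1 ≤ n) {μ : ℂ} (hμ : μ ≠ 0) :
    ∃ s : Finset ℂ, s.Nonempty ∧
      Lagrange.nodal s id = Polynomial.X ^ n - Polynomial.C μ := by
  set p : Polynomial ℂ := Polynomial.X ^ n - Polynomial.C μ with hp
  have hmonic : p.Monic := Polynomial.monic_X_pow_sub_C μ (by lia)
  have hsep : p.Separable :=
    Polynomial.separable_X_pow_sub_C μ (by exact_mod_cast (by lia : n ≠ 0)) hμ
  have hnd : p.roots.Nodup := Polynomial.nodup_roots hsep
  have hsplit : p.Splits := IsAlgClosed.splits p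
  refine ⟨p.roots.toFinset, ?_, ?_⟩
  · obtain ⟨z, hz⟩ := IsAlgClosed.exists_root p (by
      rw [hp, Polynomial.degree_X_pow_sub_C (by lia)]
      exact_mod_cast (by lia : n ≠ 0))
    exact ⟨z, by simpa [hmonic.ne_zero] using hz⟩
  · rw [Lagrange.nodal_eq, Finset.prod, Multiset.toFinset_val, hnd.dedup]
    exact (hsplit.eq_prod_roots_of_monic hmonic).symm

/-- Under dominance at `0`, if `‖A ^ (k + 1) y‖` is small relative to `‖y‖` then so is
`‖A y‖`. -/
lemma norm_apply_small {A : H →L[ℂ] H} {M : ℝ} (hM0 : 0 < M)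
    (hM : ∀ x : H, ‖adjoint A x‖ ≤ M * ‖A x‖) (k : ℕ) :
    ∀ ε : ℝ, 0 < ε → ∃ δ : ℝ, 0 < δ ∧
      ∀ y : H, ‖(A ^ (k + 1)) y‖ ≤ δ * ‖y‖ → ‖A y‖ ≤ ε * ‖y‖ := by
  induction k with
  | zero => exact fun ε hε => ⟨ε, hε, fun y hy => by simpa using hy⟩
  | succ k ih =>
    intro ε hε
    obtain ⟨δ, hδ, h⟩ := ih ε hε
    have hK : 0 < M * (‖A ^ k‖ + 1) := by positivity
    refine ⟨δ ^ 2 / (M * (‖A ^ k‖ + 1)), by positivity, fun y hy => h y ?_⟩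
    have e1 : (A ^ (k + 1)) y = A ((A ^ k) y) := by rw [pow_succ', mul_apply_eq_comp]
    have e2 : (A ^ (k + 1 + 1)) y = A ((A ^ (k + 1)) y) := by rw [pow_succ', mul_apply_eq_comp]
    -- `‖A x‖ ^ 2 = ⟪A* (A x), x⟫ ≤ M ‖A (A x)‖ ‖x‖` for `x = A ^ k y`.
    have hsq : ‖(A ^ (k + 1)) y‖ ^ 2 ≤ M * ‖(A ^ (k + 1 + 1)) y‖ * ‖(A ^ k) y‖ := by
      have h1 : ‖(A ^ (k + 1)) y‖ ^ 2
          = ‖inner ℂ (adjoint A ((A ^ (k + 1)) y)) ((A ^ k) y)‖ := by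
        rw [adjoint_inner_left, ← e1, inner_self_eq_norm_sq_to_K]
        simp
      rw [h1, e2]
      exact (norm_inner_le_norm _ _).trans (by gcongr; exact hM _)
    refine (sq_le_sq₀ (norm_nonneg _) (by positivity)).1 ?_
    calc ‖(A ^ (k + 1)) y‖ ^ 2 ≤ M * ‖(A ^ (k + 1 + 1)) y‖ * ‖(A ^ k) y‖ := hsq
      _ ≤ M * (δ ^ 2 / (M * (‖A ^ k‖ + 1)) * ‖y‖) * ((‖A ^ k‖ + 1) * ‖y‖) := by
          gcongr
          exact (le_opNorm _ _).trans (by gcongr; linarith)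
      _ = (δ * ‖y‖) ^ 2 := by field_simp

/-- Approximate eigenvectors of `A ^ n` almost annihilate the self-commutator of `A`. -/
lemma local_estimate {n : ℕ} (hn : 1 ≤ n) {A : H →L[ℂ] H}
    (hdom : ∀ z : ℂ, ∃ M : ℝ, 0 < M ∧
      ∀ x : H, ‖adjoint (A - z • 1) x‖ ≤ M * ‖(A - z • 1) x‖)
    (μ : ℂ) {ε : ℝ} (hε : 0 < ε) :
    ∃ δ : ℝ, 0 < δ ∧ ∀ y : H, ‖(A ^ n - μ • 1) y‖ ≤ δ * ‖y‖ →
      ‖(adjoint A * A - A * adjoint A) y‖ ≤ ε * ‖y‖ := by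
  rcases eq_or_ne μ 0 with rfl | hμ
  · obtain ⟨M, hM0, hM⟩ := hdom 0
    have hM' : ∀ x : H, ‖adjoint A x‖ ≤ M * ‖A x‖ := by simpa using hM
    obtain ⟨k, rfl⟩ : ∃ k, n = k + 1 := ⟨n - 1, by lia⟩
    have hK : 0 < (‖A‖ + 1) * (1 + M) := by positivity
    obtain ⟨δ, hδ, h⟩ := norm_apply_small hM0 hM' k (ε / ((‖A‖ + 1) * (1 + M))) (by positivity)
    refine ⟨δ, hδ, fun y hy => ?_⟩
    have h1 := norm_selfComm_le hM y
    simp only [zero_smul, sub_zero] at h1 hy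
    calc _ ≤ ‖A‖ * (1 + M) * ‖A y‖ := h1
      _ ≤ (‖A‖ + 1) * (1 + M) * (ε / ((‖A‖ + 1) * (1 + M)) * ‖y‖) := by
          gcongr
          · linarith
          · exact h y hy
      _ = ε * ‖y‖ := by field_simp
  · obtain ⟨s, hs, hnod⟩ := exists_nodal_eq hn hμ
    obtain ⟨C, hC, h⟩ := norm_selfComm_le_of_nodal hdom hs
    refine ⟨ε / C, by positivity, fun y hy => (h y).trans ?_⟩
    have e : Polynomial.aeval A (Lagrange.nodal s id) = A ^ n - μ • 1 := by
      rw [hnod]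
      simp [Algebra.algebraMap_eq_smul_one]
    rw [e]
    calc C * ‖(A ^ n - μ • 1) y‖ ≤ C * (ε / C * ‖y‖) := by gcongr
      _ = ε * ‖y‖ := by field_simp

end helpers

/-- Theorem 3.5, dominant case: If `A^n` is normal and `A` is dominant
(for every `z : ℂ` there is `M_z > 0` with `‖(A - z)* x‖ ≤ M_z ‖(A - z) x‖` for all `x`),
then `A` is normal. -/
theorem dominant_nthRoot_normal {H : Type*} [NormedAddCommGroup H] [InnerProductSpace ℂ H]
    [CompleteSpace H] (n : ℕ) (hn : 1 ≤ n) (A : H →L[ℂ] H)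
    (hAn : adjoint (A ^ n) * A ^ n = A ^ n * adjoint (A ^ n))
    (hdom : ∀ z : ℂ, ∃ M : ℝ, 0 < M ∧
      ∀ x : H, ‖adjoint (A - z • 1) x‖ ≤ M * ‖(A - z • 1) x‖) :
    adjoint A * A = A * adjoint A := by
  have hN : IsStarNormal (A ^ n) := ⟨hAn⟩
  have hNA : Commute (A ^ n) A := Commute.pow_self A n
  have hNA' : Commute (A ^ n) (adjoint A) := by
    simpa [star_eq_adjoint] using (hN.commute_star_left hNA).star_star
  have hDsa : IsSelfAdjoint (adjoint A * A - A * adjoint A) :=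
    (IsSelfAdjoint.star_mul_self A).sub (IsSelfAdjoint.mul_star_self A)
  have hND : Commute (A ^ n) (adjoint A * A - A * adjoint A) :=
    (hNA'.mul_right hNA).sub_right (hNA.mul_right hNA')
  rw [← sub_eq_zero]
  by_contra hD0
  obtain ⟨μ, d, hd, happ⟩ :=
    exists_joint_approx_eigenvector hN hDsa.isStarNormal hND hD0
  have hd' : 0 < ‖d‖ := norm_pos_iff.2 hd
  obtain ⟨δ, hδ, hloc⟩ := local_estimate hn hdom μ (half_pos hd')
  obtain ⟨y, hy⟩ := happ (min δ (‖d‖ / 2) ^ 2) (by positivity)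
  set D := adjoint A * A - A * adjoint A
  rw [← mul_pow] at hy
  have hm : 0 ≤ min δ (‖d‖ / 2) * ‖y‖ := by positivity
  have h1 : ‖(A ^ n - μ • 1) y‖ ≤ δ * ‖y‖ := by
    refine (abs_le_of_sq_le_sq' (b := min δ (‖d‖ / 2) * ‖y‖) ?_ hm).2.trans
      (by gcongr; exact min_le_left _ _)
    nlinarith [sq_nonneg ‖(D - d • 1) y‖]
  have h2 : ‖(D - d • 1) y‖ < ‖d‖ / 2 * ‖y‖ := by
    refine (abs_lt_of_sq_lt_sq' (b := min δ (‖d‖ / 2) * ‖y‖) ?_ hm).2.trans_le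
      (by gcongr; exact min_le_right _ _)
    nlinarith [sq_nonneg ‖(A ^ n - μ • 1) y‖]
  have h3 := hloc y h1
  have h4 : ‖d‖ * ‖y‖ ≤ ‖D y‖ + ‖(D - d • 1) y‖ := by
    have : d • y = D y - (D - d • 1) y := by simp
    rw [← norm_smul, this]
    exact norm_sub_le _ _
  linarith
end

section
/- (Theorem 3.5, class A(1,1) case) Let H be a complex Hilbert space, let n ≥ 1 be an integer, and let A be a bounded linear operator on H such that A^n is normal. If A belongs to class A(1,1), i.e. |A|² ≤ |A²| where |T| denotes the positive square root (T*T)^{1/2}, then A is normal: A*A = AA*. -/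
open ContinuousLinearMap Filter Topology

/-!
Write `Q = A* A`, `N = A ^ n` and `B = N* N`. The class A(1,1) inequality makes `A` paranormal,
`‖A x‖ ^ 2 ≤ ‖A ^ 2 x‖ ‖x‖` (`paranormal_of_classA`), so `k ↦ ‖A ^ k x‖ ^ 2` is log-convex. For a
unit vector `x`, log-convexity gives

* `⟪Q x, x⟫ ^ n ≤ ⟪B x, x⟫`, comparing the steps `0 → 1` and `0 → n`;
* `⟪B x, x⟫ ^ (n + 1) ≤ ⟪Q B x, x⟫ ^ n`, comparing the steps `n → n + 1` and `0 → n`.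

The second form uses that `A`, and hence `Q`, commutes with `N` and `N*`, which is Fuglede's theorem
for the normal operator `N`. So `Q` and `B` are commuting positive operators and `Q + i B` is normal.
Every point `q + i b` of its spectrum has joint approximate eigenvectors
(`exists_joint_approx_eigenvectors`); along these the two inequalities become `q ^ n ≤ b` and
`b ^ (n + 1) ≤ (q b) ^ n`, which force `q ^ n = b`. By the functional calculus `Q ^ n = B`
(`pow_eq_of_moment_inequalities`).

Consequently `Q` is the positive `n`-th root of `B`, so it commutes with everything that `B` commutes
with, in particular with `A`. Hence `D = A* A - A A*` satisfies `D A = 0`. Moreover `D` vanishes on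
`ker A*`, because `ker A* ⊆ ker N* = ker N = ker A`, the last equality by the first inequality. Since
`D` is self-adjoint, `D A = 0` says that the range of `D` lies in `ker A*`, so `D ^ 2 = 0` and
`D = 0`.
-/

section LogConvex

variable {a : ℕ → ℝ}

/-- The first ratio of a log-convex sequence is at most any later ratio. -/
lemma logConvex_step (h0 : ∀ k, 0 ≤ a k) (h : ∀ k, a (k + 1) ^ 2 ≤ a (k + 2) * a k) (k : ℕ) :
    a 1 * a k ≤ a (k + 1) * a 0 := by
  induction k with
  | zero => simp
  | succ k ih =>
    rcases (h0 (k + 1)).eq_or_lt with hk | hk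
    · rw [← hk, mul_zero]
      exact mul_nonneg (h0 _) (h0 _)
    · refine le_of_mul_le_mul_right ?_ hk
      calc a 1 * a (k + 1) * a (k + 1) = a 1 * a (k + 1) ^ 2 := by ring
        _ ≤ a 1 * (a (k + 2) * a k) := mul_le_mul_of_nonneg_left (h k) (h0 1)
        _ = a (k + 2) * (a 1 * a k) := by ring
        _ ≤ a (k + 2) * (a (k + 1) * a 0) := mul_le_mul_of_nonneg_left ih (h0 _)
        _ = a (k + 1 + 1) * a 0 * a (k + 1) := by ring

lemma logConvex_pow_le (h0 : ∀ k, 0 ≤ a k) (h : ∀ k, a (k + 1) ^ 2 ≤ a (k + 2) * a k)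
    (h1 : a 0 = 1) (k : ℕ) : a 1 ^ k ≤ a k := by
  induction k with
  | zero => simp [h1]
  | succ k ih =>
    calc a 1 ^ (k + 1) = a 1 * a 1 ^ k := by ring
      _ ≤ a 1 * a k := mul_le_mul_of_nonneg_left ih (h0 1)
      _ ≤ a (k + 1) := by simpa [h1] using logConvex_step h0 h k

lemma logConvex_pow_succ_le (h0 : ∀ k, 0 ≤ a k) (h : ∀ k, a (k + 1) ^ 2 ≤ a (k + 2) * a k)
    (h1 : a 0 = 1) (k : ℕ) : a k ^ (k + 1) ≤ a (k + 1) ^ k := by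
  induction k with
  | zero => simp [h1]
  | succ k ih =>
    rcases (h0 (k + 1)).eq_or_lt with hk | hk
    · rw [← hk, zero_pow (by omega)]
      exact pow_nonneg (h0 _) _
    · refine le_of_mul_le_mul_right ?_ (pow_pos hk k)
      calc a (k + 1) ^ (k + 1 + 1) * a (k + 1) ^ k = (a (k + 1) ^ 2) ^ (k + 1) := by ring
        _ ≤ (a (k + 2) * a k) ^ (k + 1) := pow_le_pow_left₀ (sq_nonneg _) (h k) _
        _ = a (k + 2) ^ (k + 1) * a k ^ (k + 1) := by ring
        _ ≤ a (k + 2) ^ (k + 1) * a (k + 1) ^ k :=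
          mul_le_mul_of_nonneg_left ih (pow_nonneg (h0 _) _)

end LogConvex

section Operators

variable {H : Type*} [NormedAddCommGroup H] [InnerProductSpace ℂ H] [CompleteSpace H]

lemma re_inner_adjoint_mul_self (S : H →L[ℂ] H) (x : H) :
    (inner ℂ ((adjoint S * S) x) x).re = ‖S x‖ ^ 2 := by
  have : inner ℂ ((adjoint S * S) x) x = inner ℂ (S x) (S x) := by
    rw [mul_apply_eq_comp, adjoint_inner_left]
  rw [this, inner_self_eq_norm_sq_to_K]
  norm_cast

lemma paranormal_of_classA (A : H →L[ℂ] H)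
    (hA : ∀ R : H →L[ℂ] H, R.IsPositive → R * R = adjoint (A ^ 2) * A ^ 2 →
      (R - adjoint A * A).IsPositive) (x : H) :
    ‖A x‖ ^ 2 ≤ ‖(A ^ 2) x‖ * ‖x‖ := by
  set R : H →L[ℂ] H := CFC.abs (A ^ 2) with hR
  have hR0 : R.IsPositive := (nonneg_iff_isPositive R).1 (CFC.abs_nonneg _)
  have hR2 : R * R = adjoint (A ^ 2) * A ^ 2 := CFC.abs_mul_abs (A ^ 2)
  have h := (hA R hR0 hR2).re_inner_nonneg_left x
  have hRx : ‖R x‖ = ‖(A ^ 2) x‖ := by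
    have h1 : adjoint R = R := hR0.isSelfAdjoint.adjoint_eq
    have h2 : ‖R x‖ ^ 2 = ‖(A ^ 2) x‖ ^ 2 := by
      rw [← re_inner_adjoint_mul_self, ← re_inner_adjoint_mul_self, h1, hR2]
    exact (sq_eq_sq₀ (norm_nonneg _) (norm_nonneg _)).1 h2
  rw [sub_apply, inner_sub_left, map_sub, sub_nonneg] at h
  calc ‖A x‖ ^ 2 = (inner ℂ ((adjoint A * A) x) x).re := (re_inner_adjoint_mul_self A x).symm
    _ ≤ (inner ℂ (R x) x).re := h
    _ ≤ ‖R x‖ * ‖x‖ := re_inner_le_norm (𝕜 := ℂ) _ _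
    _ = _ := by rw [hRx]

/-- A normal operator that is not invertible is not bounded below on the unit sphere. -/
lemma exists_unit_norm_lt {S : H →L[ℂ] H} (hS : IsStarNormal S) (hu : ¬ IsUnit S) {ε : ℝ}
    (hε : 0 < ε) : ∃ v : H, ‖v‖ = 1 ∧ ‖S v‖ < ε := by
  by_contra! hcon
  apply hu
  have hb : ∀ v, ε * ‖v‖ ≤ ‖S v‖ := by
    intro v
    rcases eq_or_ne v 0 with rfl | hv
    · simp
    have hv' : 0 < ‖v‖ := norm_pos_iff.2 hv
    have h := hcon (((‖v‖⁻¹ : ℝ) : ℂ) • v) (by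
      rw [norm_smul, Complex.norm_real, norm_inv, norm_norm, inv_mul_cancel₀ hv'.ne'])
    rw [map_smul, norm_smul, Complex.norm_real, norm_inv, norm_norm] at h
    rw [← le_div_iff₀ hv']
    rwa [inv_mul_eq_div] at h
  have hunit : IsUnit (adjoint S * S) := by
    refine isUnit_of_forall_le_norm_inner_map (c := ⟨ε ^ 2, by positivity⟩) (𝕜 := ℂ) _
      (by change 0 < ε ^ 2; positivity) fun x => ?_
    change ‖x‖ ^ 2 * ε ^ 2 ≤ _
    calc ‖x‖ ^ 2 * ε ^ 2 = (ε * ‖x‖) ^ 2 := by ring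
      _ ≤ ‖S x‖ ^ 2 := pow_le_pow_left₀ (by positivity) (hb x) 2
      _ = (inner ℂ ((adjoint S * S) x) x).re := (re_inner_adjoint_mul_self S x).symm
      _ ≤ _ := Complex.re_le_norm _
  exact ((show Commute (adjoint S) S from hS.star_comm_self).isUnit_mul_iff.1 hunit).2

/-- The normal operator encoding a pair of commuting self-adjoint operators. -/
lemma isStarNormal_add_I_smul {Q B : H →L[ℂ] H} (hQ : IsSelfAdjoint Q) (hB : IsSelfAdjoint B)
    (hQB : Commute Q B) : IsStarNormal (Q + Complex.I • B) := by
  refine ⟨?_⟩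
  have hc := hQB.eq
  simp only [Commute, SemiconjBy, star_add, star_smul, hQ.star_eq, hB.star_eq, add_mul, mul_add,
    smul_mul_assoc, mul_smul_comm, hc, Complex.star_def, Complex.conj_I, smul_add, smul_smul]
  module

lemma exists_joint_approx_eigenvectors {Q B : H →L[ℂ] H} (hQ : IsSelfAdjoint Q)
    (hB : IsSelfAdjoint B) (hQB : Commute Q B) {z : ℂ} (hz : z ∈ spectrum ℂ (Q + Complex.I • B)) :
    ∃ v : ℕ → H, (∀ k, ‖v k‖ = 1) ∧ Tendsto (fun k => Q (v k) - (z.re : ℂ) • v k) atTop (𝓝 0) ∧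
      Tendsto (fun k => B (v k) - (z.im : ℂ) • v k) atTop (𝓝 0) := by
  -- The shifted pair `Q - re z`, `B - im z` is again commuting and self-adjoint.
  set Q' : H →L[ℂ] H := Q - (z.re : ℂ) • 1 with hQ'
  set B' : H →L[ℂ] H := B - (z.im : ℂ) • 1 with hB'
  have sQ : IsSelfAdjoint Q' := by
    rw [IsSelfAdjoint, hQ', star_sub, star_smul, star_one, hQ.star_eq]; simp
  have sB : IsSelfAdjoint B' := by
    rw [IsSelfAdjoint, hB', star_sub, star_smul, star_one, hB.star_eq]; simp
  have hc : Commute Q' B' :=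
    (hQB.sub_left ((Commute.one_left B).smul_left _)).sub_right
      ((Commute.one_right Q').smul_right _)
  set S : H →L[ℂ] H := Q' + Complex.I • B' with hS
  have hSn : IsStarNormal S := isStarNormal_add_I_smul sQ sB hc
  have hSz : S = -(algebraMap ℂ (H →L[ℂ] H) z - (Q + Complex.I • B)) := by
    have hz' : z = z.re + Complex.I * z.im := by rw [mul_comm]; exact (Complex.re_add_im z).symm
    conv_rhs => rw [hz']
    rw [Algebra.algebraMap_eq_smul_one, hS, hQ', hB']
    module
  have hSu : ¬ IsUnit S := by
    rw [hSz, IsUnit.neg_iff]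
    exact hz
  have hex : ∀ k : ℕ, ∃ v : H, ‖v‖ = 1 ∧ ‖S v‖ < 1 / ((k : ℝ) + 1) := fun k =>
    exists_unit_norm_lt hSn hSu (by positivity)
  choose v hv1 hv2 using hex
  have hS0 : Tendsto (fun k => S (v k)) atTop (𝓝 0) :=
    squeeze_zero_norm (fun k => (hv2 k).le) tendsto_one_div_add_atTop_nhds_zero_nat
  -- Normality makes the adjoint small along the same vectors.
  have hS1 : Tendsto (fun k => adjoint S (v k)) atTop (𝓝 0) :=
    squeeze_zero_norm (fun k => by
      rw [← isStarNormal_iff_norm_eq_adjoint.1 hSn]; exact (hv2 k).le)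
      tendsto_one_div_add_atTop_nhds_zero_nat
  have hSa : adjoint S = Q' - Complex.I • B' := by
    rw [← star_eq_adjoint, hS, star_add, star_smul, sQ.star_eq, sB.star_eq]
    simp [sub_eq_add_neg]
  refine ⟨v, hv1, ?_, ?_⟩
  · have h := (hS0.add hS1).const_smul (2⁻¹ : ℂ)
    rw [add_zero, smul_zero] at h
    refine h.congr fun k => ?_
    rw [hSa]
    simp only [hS, hQ', add_apply, sub_apply, smul_apply, one_apply_eq_self]
    module
  · have h := (hS0.sub hS1).const_smul (2⁻¹ * -Complex.I : ℂ)
    rw [sub_zero, smul_zero] at h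
    refine h.congr fun k => ?_
    rw [hSa]
    have e : S (v k) - (Q' - Complex.I • B') (v k) = (2 * Complex.I) • B' (v k) := by
      simp only [hS, add_apply, sub_apply, smul_apply]
      module
    rw [e, smul_smul]
    have e2 : (2⁻¹ * -Complex.I * (2 * Complex.I) : ℂ) = 1 := by
      linear_combination -Complex.I_mul_I
    rw [e2, one_smul]
    simp [hB']

/-- If `v k` are unit vectors with `T (v k) - c • v k → 0`, then `⟪T (v k), v k⟫ → c`. -/
lemma tendsto_re_inner {E : Type*} [NormedAddCommGroup E] [InnerProductSpace ℂ E] {T : E →L[ℂ] E}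
    {c : ℝ} {v : ℕ → E} (hv : ∀ k, ‖v k‖ = 1)
    (h : Tendsto (fun k => T (v k) - (c : ℂ) • v k) atTop (𝓝 0)) :
    Tendsto (fun k => (inner ℂ (T (v k)) (v k)).re) atTop (𝓝 c) := by
  rw [← tendsto_sub_nhds_zero_iff]
  refine squeeze_zero_norm (fun k => ?_) (tendsto_zero_iff_norm_tendsto_zero.1 h)
  have e : (inner ℂ (T (v k)) (v k)).re - c = (inner ℂ (T (v k) - (c : ℂ) • v k) (v k)).re := by
    rw [inner_sub_left, inner_smul_left, inner_self_eq_norm_sq_to_K, hv k]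
    simp
  rw [e, Real.norm_eq_abs]
  calc _ ≤ ‖inner ℂ (T (v k) - (c : ℂ) • v k) (v k)‖ := Complex.abs_re_le_norm _
    _ ≤ ‖T (v k) - (c : ℂ) • v k‖ * ‖v k‖ := norm_inner_le_norm _ _
    _ = _ := by rw [hv k, mul_one]

/-- The two inequalities between moments of unit vectors determine `B` as the `n`-th power of `Q`,
since they pass to the joint spectrum of the pair. -/
lemma pow_eq_of_moment_inequalities {Q B : H →L[ℂ] H} {n : ℕ} (hQ : 0 ≤ Q)
    (hB : 0 ≤ B) (hQB : Commute Q B)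
    (h1 : ∀ x : H, ‖x‖ = 1 → (inner ℂ (Q x) x).re ^ n ≤ (inner ℂ (B x) x).re)
    (h2 : ∀ x : H, ‖x‖ = 1 →
      (inner ℂ (B x) x).re ^ (n + 1) ≤ (inner ℂ ((Q * B) x) x).re ^ n) :
    Q ^ n = B := by
  have sQ : IsSelfAdjoint Q := .of_nonneg hQ
  have sB : IsSelfAdjoint B := .of_nonneg hB
  set T : H →L[ℂ] H := Q + Complex.I • B with hT
  have hTn : IsStarNormal T := isStarNormal_add_I_smul sQ sB hQB
  have hspec : ∀ z ∈ spectrum ℂ T, z.re ^ n = z.im := by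
    intro z hz
    obtain ⟨v, hv, vQ, vB⟩ := exists_joint_approx_eigenvectors sQ sB hQB hz
    have vQB : Tendsto (fun k => (Q * B) (v k) - ((z.re * z.im : ℝ) : ℂ) • v k) atTop (𝓝 0) := by
      have hQc : Tendsto (fun k => Q (B (v k) - (z.im : ℂ) • v k)) atTop (𝓝 0) := by
        have h := (Q.continuous.tendsto 0).comp vB
        rwa [map_zero] at h
      have h := hQc.add (vQ.const_smul (z.im : ℂ))
      rw [smul_zero, add_zero] at h
      refine h.congr fun k => ?_
      rw [map_sub, map_smul, mul_apply_eq_comp, Complex.ofReal_mul]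
      module
    have tQ := tendsto_re_inner hv vQ
    have tB := tendsto_re_inner hv vB
    have tQB := tendsto_re_inner hv vQB
    have q0 : 0 ≤ z.re := ge_of_tendsto' tQ fun k =>
      ((nonneg_iff_isPositive Q).1 hQ).re_inner_nonneg_left (v k)
    have b0 : 0 ≤ z.im := ge_of_tendsto' tB fun k =>
      ((nonneg_iff_isPositive B).1 hB).re_inner_nonneg_left (v k)
    have i1 : z.re ^ n ≤ z.im := le_of_tendsto_of_tendsto' (tQ.pow n) tB fun k => h1 _ (hv k)
    have i2 : z.im ^ (n + 1) ≤ (z.re * z.im) ^ n :=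
      le_of_tendsto_of_tendsto' (tB.pow (n + 1)) (tQB.pow n) fun k => h2 _ (hv k)
    refine le_antisymm i1 ?_
    rcases b0.eq_or_lt with hb | hb
    · rw [← hb]; positivity
    · refine le_of_mul_le_mul_right ?_ (pow_pos hb n)
      calc z.im * z.im ^ n = z.im ^ (n + 1) := by ring
        _ ≤ (z.re * z.im) ^ n := i2
        _ = z.re ^ n * z.im ^ n := mul_pow _ _ _
  have hstar : star T = Q - Complex.I • B := by
    rw [hT, star_add, star_smul, sQ.star_eq, sB.star_eq]
    simp [sub_eq_add_neg]
  have eQ : cfc (fun z : ℂ => (z.re : ℂ)) T = Q := by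
    rw [cfc_re_id T, realPart_apply_coe, hstar, hT]
    module
  have eB : cfc (fun z : ℂ => (z.im : ℂ)) T = B := by
    have h := realPart_add_I_smul_imaginaryPart T
    rw [← cfc_re_id T, eQ, ← cfc_im_id T] at h
    have h' : Complex.I • cfc (fun z : ℂ => (z.im : ℂ)) T = Complex.I • B :=
      add_left_cancel (h.trans hT)
    exact smul_right_injective _ Complex.I_ne_zero h'
  calc Q ^ n = cfc (fun z : ℂ => (z.re : ℂ) ^ n) T := by rw [cfc_pow _ n T, eQ]
    _ = cfc (fun z : ℂ => (z.im : ℂ)) T := cfc_congr fun z hz => by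
      rw [← hspec z hz]; push_cast; rfl
    _ = B := eB

/-- A positive operator is a continuous function of its `n`-th power, so it lies in the bicommutant
of that power. -/
lemma commute_of_commute_pow {Q A : H →L[ℂ] H} {n : ℕ} (hn : n ≠ 0) (hQ : 0 ≤ Q)
    (h : Commute (Q ^ n) A) : Commute Q A := by
  have e : (Q ^ n) ^ ((n : ℝ)⁻¹) = Q := by
    have hn' : (n : ℝ) ≠ 0 := Nat.cast_ne_zero.2 hn
    rw [← CFC.rpow_natCast Q n, CFC.rpow_rpow_of_exponent_nonneg Q _ _ (by positivity)
      (by positivity), mul_inv_cancel₀ hn', CFC.rpow_one Q]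
  rw [← e, CFC.rpow_def]
  exact h.cfc_nnreal _

end Operators

/-- Theorem 3.5, class A(1,1) case: If `A^n` is normal and `A` belongs to
class A(1,1), i.e. `|A|² ≤ |A²|` where `|T|` is the positive square root of `T*T`
(formulated: for every positive operator `R` with `R * R = (A²)* A²` — i.e. `R = |A²|` —
the operator `R - A* A = |A²| - |A|²` is positive), then `A` is normal. -/
theorem classA11_nthRoot_normal {H : Type*} [NormedAddCommGroup H] [InnerProductSpace ℂ H]
    [CompleteSpace H] (n : ℕ) (hn : 1 ≤ n) (A : H →L[ℂ] H)
    (hAn : adjoint (A ^ n) * A ^ n = A ^ n * adjoint (A ^ n))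
    (hA11 : ∀ R : H →L[ℂ] H, R.IsPositive → R * R = adjoint (A ^ 2) * A ^ 2 →
      (R - adjoint A * A).IsPositive) :
    adjoint A * A = A * adjoint A := by
  have hn0 : n ≠ 0 := by omega
  set N : H →L[ℂ] H := A ^ n with hN
  have hNn : IsStarNormal N := ⟨hAn⟩
  have cAN : Commute A N := (Commute.refl A).pow_right n
  have cANs : Commute A (adjoint N) := hNn.commute_star_right cAN
  have cAsN : Commute (adjoint A) N := by
    simpa only [star_eq_adjoint, adjoint_adjoint] using cANs.star_star
  have cAsNs : Commute (adjoint A) (adjoint N) := cAN.star_star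
  have cAB : Commute A (adjoint N * N) := cANs.mul_right cAN
  have cQN : Commute (adjoint A * A) N := cAsN.mul_left cAN
  have cQNs : Commute (adjoint A * A) (adjoint N) := cAsNs.mul_left cANs
  have hQ0 : 0 ≤ adjoint A * A := star_mul_self_nonneg A
  have hB0 : 0 ≤ adjoint N * N := star_mul_self_nonneg N
  have hpar := paranormal_of_classA A hA11
  have hlog : ∀ (x : H) (k : ℕ), (‖(A ^ (k + 1)) x‖ ^ 2) ^ 2 ≤
      ‖(A ^ (k + 2)) x‖ ^ 2 * ‖(A ^ k) x‖ ^ 2 := by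
    intro x k
    have h := hpar ((A ^ k) x)
    have e1 : A ((A ^ k) x) = (A ^ (k + 1)) x := by rw [pow_succ', mul_apply_eq_comp]
    have e2 : (A ^ 2) ((A ^ k) x) = (A ^ (k + 2)) x := by
      rw [← mul_apply_eq_comp, ← pow_add, add_comm 2 k]
    rw [e1, e2] at h
    rw [← mul_pow]
    exact pow_le_pow_left₀ (by positivity) h 2
  have hlow : ∀ x : H, ‖x‖ = 1 → (‖A x‖ ^ 2) ^ n ≤ ‖N x‖ ^ 2 := by
    intro x hx
    have h := logConvex_pow_le (a := fun k => ‖(A ^ k) x‖ ^ 2) (fun k => by positivity)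
      (hlog x) (by simp [hx]) n
    rwa [pow_one] at h
  have hQB : (adjoint A * A) ^ n = adjoint N * N := by
    refine pow_eq_of_moment_inequalities hQ0 hB0 (cQNs.mul_right cQN) (fun x hx => ?_)
      fun x hx => ?_
    · rw [re_inner_adjoint_mul_self, re_inner_adjoint_mul_self]
      exact hlow x hx
    · have e : adjoint A * A * (adjoint N * N) = adjoint (A * N) * (A * N) := by
        rw [← star_eq_adjoint (A * N), star_mul, star_eq_adjoint, star_eq_adjoint, ← mul_assoc,
          cQNs.eq]
        simp only [mul_assoc]
      rw [e, re_inner_adjoint_mul_self, re_inner_adjoint_mul_self, hN, ← pow_succ']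
      exact logConvex_pow_succ_le (a := fun k => ‖(A ^ k) x‖ ^ 2) (fun k => by positivity)
        (hlog x) (by simp [hx]) n
  have cQA : Commute (adjoint A * A) A := by
    refine commute_of_commute_pow hn0 hQ0 ?_
    rw [hQB]
    exact cAB.symm
  have hker : ∀ y : H, adjoint A y = 0 → A y = 0 := by
    intro y hy
    have hNsy : adjoint N y = 0 := by
      have : adjoint N = adjoint A ^ n := star_pow A n
      obtain ⟨m, rfl⟩ := Nat.exists_eq_succ_of_ne_zero hn0
      rw [this, pow_succ, mul_apply_eq_comp, hy, map_zero]
    have hNy : N y = 0 := (hNn.adjoint_apply_eq_zero_iff y).1 hNsy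
    -- `hlow` on the normalized vector now bounds a power of `‖A y‖` by `‖N y‖ = 0`.
    rcases eq_or_ne y 0 with rfl | hy0
    · simp
    have hy' : ‖y‖ ≠ 0 := norm_ne_zero_iff.2 hy0
    have h := hlow (((‖y‖⁻¹ : ℝ) : ℂ) • y) (by
      rw [norm_smul, Complex.norm_real, norm_inv, norm_norm, inv_mul_cancel₀ hy'])
    rw [map_smul N, hNy, smul_zero, norm_zero, zero_pow two_ne_zero] at h
    have h' := pow_eq_zero_iff hn0 |>.1 (le_antisymm h (by positivity))
    rw [pow_eq_zero_iff two_ne_zero, norm_eq_zero, map_smul, smul_eq_zero] at h'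
    exact h'.resolve_left (by simpa using hy0)
  set D : H →L[ℂ] H := adjoint A * A - A * adjoint A with hD
  have hDs : IsSelfAdjoint D := (IsSelfAdjoint.star_mul_self A).sub (IsSelfAdjoint.mul_star_self A)
  have hDA : D * A = 0 := by
    rw [hD, sub_mul, cQA.eq, mul_assoc, sub_self]
  have hAD : adjoint A * D = 0 := by
    have h := congrArg star hDA
    rwa [star_mul, hDs.star_eq, star_zero] at h
  have hDD : star D * D = 0 := by
    rw [hDs.star_eq]
    ext x
    have hx : adjoint A (D x) = 0 := by rw [← mul_apply_eq_comp, hAD, zero_apply]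
    have hx' := hker _ hx
    rw [mul_apply_eq_comp]
    conv_lhs => rw [hD, sub_apply, mul_apply_eq_comp, mul_apply_eq_comp]
    rw [← hD, hx, hx']
    simp
  exact sub_eq_zero.1 (CStarRing.star_mul_self_eq_zero_iff D |>.1 hDD)
end
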